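/- arXiv:2402.05836 — 8 statements merged into one kernel-verified Lean document; each statement's English description precedes it below -/
import Mathlib

section
/- Let k be a field of characteristic p > 0 and let F be a finitely generated field extension of k. Let E = kF^p be the subfield of F generated by k together with the p-th powers of elements of F. Then there exists e ∈ ℕ such that [F : E] = p^e and the module of Kähler differentials Ω¹_{F/k} is a free F-module of rank e; equivalently, for every F-module C the evaluation map at a p-basis gives an F-linear isomorphism Der_k(F, C) ≅ C^e. -/
/-!
Write `k(F^p, T)` for the subfield of `F` generated over `k` by the `p`-th powers and a set `T`. The
key fact is that spans of differentials detect membership in these fields: `d x` lies in the span of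
`d T` in `Ω[F⁄k]` if and only if `x ∈ k(F^p, T)`. One direction is the Leibniz rule together with
`d (y ^ p) = 0`. For the other, pass to `Ω[F⁄K]` with `K = k(F^p, T)`, where `d x` vanishes, and
suppose `x ∉ K`. Enlarge `K` to a maximal subfield `M` not containing `x`. Every `y ∉ M` has degree
`p` over `M` and `x ∈ M(y)`, so `M(y) = M(x)`; hence `F = M(x)`. Now `d x = 0` makes `F / M`
unramified as well as purely inseparable, so `F = M`, which is absurd.

Consequently, if `d a₁, …, d aₑ` is a basis of `Ω[F⁄k]`, then `F = k(F^p, a₁, …, aₑ)` and each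
`aᵢ` lies outside the field generated over `k F^p` by its predecessors, so adjoining it multiplies
the degree by `p`.
-/

universe u v

section

open Module IntermediateField KaehlerDifferential

theorem exists_maximal_not_le_of_isCompactElement {α : Type*} [CompleteLattice α] {c a : α}
    (hc : IsCompactElement c) (hca : ¬ c ≤ a) : ∃ m, a ≤ m ∧ Maximal (¬ c ≤ ·) m := by
  rw [CompleteLattice.isCompactElement_iff_le_of_directed_sSup_le] at hc
  refine zorn_le_nonempty₀ {m | ¬ c ≤ m} (fun s hs hchain y hy ↦ ?_) a hca
  refine ⟨sSup s, fun hle ↦ ?_, fun _ ↦ le_sSup⟩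
  obtain ⟨m, hm, hcm⟩ := hc s ⟨y, hy⟩ hchain.directedOn hle
  exact hs hm hcm

section FieldExtension

variable {K F : Type*} [Field K] [Field F] [Algebra K F] {x y : F}

theorem adjoin_simple_eq_of_mem_of_finrank_prime (hy : (finrank K K⟮y⟯).Prime) (hxy : x ∈ K⟮y⟯)
    (hx : x ∉ (algebraMap K F).range) : K⟮x⟯ = K⟮y⟯ := by
  have hle : K⟮x⟯ ≤ K⟮y⟯ := adjoin_simple_le_iff.2 hxy
  have hne : finrank K K⟮x⟯ ≠ 1 := by
    rwa [Ne, finrank_adjoin_simple_eq_one_iff, mem_bot]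
  have : FiniteDimensional K K⟮y⟯ := .of_finrank_pos hy.pos
  exact eq_of_le_of_finrank_eq hle
    ((hy.eq_one_or_self_of_dvd _ (finrank_dvd_of_le_right hle)).resolve_left hne)

theorem D_mem_span_image_of_mem_adjoin {T : Set F} (hx : x ∈ adjoin K T) :
    D K F x ∈ Submodule.span F (D K F '' T) := by
  induction hx using adjoin_induction with
  | mem x hx => exact Submodule.subset_span ⟨x, hx, rfl⟩
  | algebraMap r => simp
  | add x y _ _ hx hy => simpa using add_mem hx hy
  | inv x _ hx => simpa [Derivation.leibniz_inv] using Submodule.smul_mem _ _ hx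
  | mul x y _ _ hx hy =>
    simpa using add_mem (Submodule.smul_mem _ x hy) (Submodule.smul_mem _ y hx)

theorem formallyUnramified_of_adjoin_simple_eq_top_of_D_eq_zero (htop : K⟮x⟯ = ⊤)
    (hDx : D K F x = 0) : Algebra.FormallyUnramified K F := by
  have hD (y : F) : D K F y = 0 := by
    simpa [hDx] using D_mem_span_image_of_mem_adjoin (htop ▸ mem_top : y ∈ K⟮x⟯)
  refine ⟨(Submodule.subsingleton_iff F).1 (subsingleton_of_bot_eq_top ?_)⟩
  rw [← span_range_derivation, eq_comm, Submodule.span_eq_bot]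
  rintro _ ⟨y, rfl⟩
  exact hD y

theorem mem_range_of_adjoin_simple_eq_top_of_D_eq_zero [IsPurelyInseparable K F]
    (htop : K⟮x⟯ = ⊤) (hDx : D K F x = 0) : x ∈ (algebraMap K F).range := by
  have : Algebra.EssFiniteType K F :=
    IntermediateField.fg_top_iff.1 (htop ▸ fg_adjoin_of_finite (Set.finite_singleton x))
  have := formallyUnramified_of_adjoin_simple_eq_top_of_D_eq_zero htop hDx
  exact Algebra.FormallyUnramified.range_eq_top_of_isPurelyInseparable K F ▸ trivial

variable {p : ℕ} [Fact p.Prime] [CharP F p]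

open Polynomial in
theorem finrank_adjoin_simple_of_pow_mem_range (hpow : x ^ p ∈ (algebraMap K F).range)
    (hx : x ∉ (algebraMap K F).range) : finrank K K⟮x⟯ = p := by
  obtain ⟨c, hc⟩ := hpow
  have hirr : Irreducible (X ^ p - C c : K[X]) := by
    refine X_pow_sub_C_irreducible_of_prime Fact.out fun b hb ↦ hx ⟨b, frobenius_inj F p ?_⟩
    rw [frobenius_def, frobenius_def, ← map_pow, hb, hc]
  have hmonic : (X ^ p - C c : K[X]).Monic := monic_X_pow_sub_C c (NeZero.ne p)
  have hroot : aeval x (X ^ p - C c : K[X]) = 0 := by simp [hc]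
  rw [adjoin.finrank ⟨_, hmonic, hroot⟩,
    ← minpoly.eq_of_irreducible_of_monic hirr hroot hmonic, natDegree_X_pow_sub_C]

theorem isPurelyInseparable_of_forall_pow_mem_range
    (hpow : ∀ y : F, y ^ p ∈ (algebraMap K F).range) : IsPurelyInseparable K F := by
  have : CharP K p := (RingHom.charP_iff (algebraMap K F) (algebraMap K F).injective p).2 ‹_›
  exact (isPurelyInseparable_iff_pow_mem K p).2 fun y ↦ ⟨1, by simpa using hpow y⟩

theorem adjoin_simple_eq_top_of_maximal_notMem (hpow : ∀ y : F, y ^ p ∈ (algebraMap K F).range)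
    {M : IntermediateField K F} (hM : Maximal (x ∉ ·) M) : M⟮x⟯ = ⊤ := by
  have hmem {z : F} (hz : z ∈ (algebraMap M F).range) : z ∈ M := by
    obtain ⟨z, rfl⟩ := hz
    exact z.2
  refine eq_top_iff.2 fun y _ ↦ ?_
  by_cases hyM : y ∈ M
  · exact M⟮x⟯.algebraMap_mem ⟨y, hyM⟩
  have hxy : x ∈ M⟮y⟯ := by
    by_contra hxy
    have hle : M ≤ M⟮y⟯.restrictScalars K := fun z hz ↦ M⟮y⟯.algebraMap_mem ⟨z, hz⟩
    exact hyM (hM.2 hxy hle (mem_adjoin_simple_self M y))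
  have hdeg : finrank M M⟮y⟯ = p := by
    obtain ⟨c, hc⟩ := hpow y
    exact finrank_adjoin_simple_of_pow_mem_range ⟨algebraMap K M c, hc⟩ (mt hmem hyM)
  rw [adjoin_simple_eq_of_mem_of_finrank_prime (hdeg ▸ Fact.out) hxy (mt hmem hM.1)]
  exact mem_adjoin_simple_self M y

theorem mem_range_of_D_eq_zero (hpow : ∀ y : F, y ^ p ∈ (algebraMap K F).range)
    (hDx : D K F x = 0) : x ∈ (algebraMap K F).range := by
  by_contra hx
  obtain ⟨M, -, hM⟩ := exists_maximal_not_le_of_isCompactElement (a := ⊥)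
    (adjoin_simple_isCompactElement (F := K) x) (by rwa [adjoin_simple_le_iff, mem_bot])
  simp only [adjoin_simple_le_iff] at hM
  have := isPurelyInseparable_of_forall_pow_mem_range hpow
  have hDMx : D M F x = 0 := by
    simpa [hDx] using (KaehlerDifferential.map_D K M F F x).symm
  obtain ⟨z, rfl⟩ := mem_range_of_adjoin_simple_eq_top_of_D_eq_zero
    (adjoin_simple_eq_top_of_maximal_notMem hpow hM) hDMx
  exact hM.1 z.2

end FieldExtension

/-- The subfield `k(F^p, T)` of `F` generated over `k` by the `p`-th powers of all elements of `F`
and by `T`. This is the closure operator for which `p`-independence and `p`-bases are defined;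
`pClosure k p ∅` is the field `k F^p`. -/
def pClosure (k : Type*) {F : Type*} [Field k] [Field F] [Algebra k F] (p : ℕ) (T : Set F) :
    IntermediateField k F :=
  adjoin k ({x : F | ∃ y : F, y ^ p = x} ∪ T)

section PClosure

variable {p : ℕ} {k F : Type*} [Field k] [Field F] [Algebra k F] {T : Set F} {x : F}

theorem pClosure_empty : pClosure k p (∅ : Set F) = adjoin k {x : F | ∃ y : F, y ^ p = x} := by
  rw [pClosure, Set.union_empty]

theorem subset_pClosure : T ⊆ pClosure k p T :=
  Set.subset_union_right.trans (subset_adjoin ..)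

theorem pow_mem_pClosure (y : F) : y ^ p ∈ pClosure k p T :=
  subset_adjoin _ _ (.inl ⟨y, rfl⟩)

theorem pClosure_mono {S : Set F} (h : S ⊆ T) : pClosure k p S ≤ pClosure k p T :=
  adjoin.mono _ _ _ (Set.union_subset_union_right _ h)

theorem restrictScalars_adjoin_simple_pClosure :
    (adjoin (pClosure k p T) {x}).restrictScalars k = pClosure k p (insert x T) := by
  rw [pClosure, adjoin_adjoin_left, pClosure, Set.union_assoc, Set.union_singleton]

variable [CharP F p]

theorem D_mem_span_image_of_mem_pClosure (hx : x ∈ pClosure k p T) :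
    D k F x ∈ Submodule.span F (D k F '' T) := by
  refine Submodule.span_le.2 ?_ (D_mem_span_image_of_mem_adjoin hx)
  rintro _ ⟨z, ⟨y, rfl⟩ | hz, rfl⟩
  · rw [Derivation.leibniz_pow, ← Nat.cast_smul_eq_nsmul F, CharP.cast_eq_zero, zero_smul]
    exact zero_mem _
  · exact Submodule.subset_span ⟨z, hz, rfl⟩

variable [Fact p.Prime]

theorem mem_pClosure_of_D_mem_span_image (hx : D k F x ∈ Submodule.span F (D k F '' T)) :
    x ∈ pClosure k p T := by
  have hspan : Submodule.span F (D k F '' T) ≤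
      LinearMap.ker (KaehlerDifferential.map k (pClosure k p T) F F) := by
    rw [Submodule.span_le]
    rintro _ ⟨t, ht, rfl⟩
    simpa using (D (pClosure k p T) F).map_algebraMap ⟨t, subset_pClosure ht⟩
  have hDx : D (pClosure k p T) F x = 0 := by simpa using hspan hx
  obtain ⟨z, rfl⟩ := mem_range_of_D_eq_zero (fun y ↦ ⟨⟨y ^ p, pow_mem_pClosure y⟩, rfl⟩) hDx
  exact z.2

theorem D_mem_span_image_iff_mem_pClosure :
    D k F x ∈ Submodule.span F (D k F '' T) ↔ x ∈ pClosure k p T :=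
  ⟨mem_pClosure_of_D_mem_span_image, D_mem_span_image_of_mem_pClosure⟩

theorem pClosure_eq_top_of_span_D_eq_top (hT : Submodule.span F (D k F '' T) = ⊤) :
    pClosure k p T = ⊤ :=
  eq_top_iff.2 fun _ _ ↦ D_mem_span_image_iff_mem_pClosure.1 (hT ▸ Submodule.mem_top)

theorem relfinrank_pClosure_insert (hx : x ∉ pClosure k p T) :
    relfinrank (pClosure k p T) (pClosure k p (insert x T)) = p := by
  have hle := pClosure_mono (k := k) (p := p) (Set.subset_insert x T)
  have hext : extendScalars hle = adjoin (pClosure k p T) {x} := by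
    apply restrictScalars_injective k
    rw [extendScalars_restrictScalars, restrictScalars_adjoin_simple_pClosure]
  rw [relfinrank_eq_finrank_of_le hle, hext]
  exact finrank_adjoin_simple_of_pow_mem_range ⟨⟨x ^ p, pow_mem_pClosure x⟩, rfl⟩
    fun ⟨z, hz⟩ ↦ hx (hz ▸ z.2)

theorem relfinrank_pClosure_image {ι : Type*} {a : ι → F} (ha : LinearIndependent F (D k F ∘ a))
    (s : Finset ι) : relfinrank (pClosure k p ∅) (pClosure k p (a '' s)) = p ^ s.card := by
  classical
  induction s using Finset.induction_on with
  | empty => simp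
  | insert i s hi ih =>
    have hai : a i ∉ pClosure k p (a '' s) := by
      rw [← D_mem_span_image_iff_mem_pClosure, ← Set.image_comp]
      exact ha.notMem_span_image (by simpa using hi)
    rw [Finset.coe_insert, Set.image_insert_eq, ← relfinrank_mul_relfinrank
      (pClosure_mono (Set.empty_subset _)) (pClosure_mono (Set.subset_insert _ _)), ih,
      relfinrank_pClosure_insert hai, Finset.card_insert_of_notMem hi, pow_succ]

theorem finrank_pClosure_empty {ι : Type*} [Fintype ι] {a : ι → F}
    (hli : LinearIndependent F (D k F ∘ a))
    (hspan : Submodule.span F (Set.range (D k F ∘ a)) = ⊤) :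
    finrank (pClosure k p (∅ : Set F)) F = p ^ Fintype.card ι := by
  have htop : pClosure k p (Set.range a) = ⊤ :=
    pClosure_eq_top_of_span_D_eq_top (by rwa [← Set.range_comp])
  rw [← relfinrank_top_right, ← htop, ← Finset.card_univ, ← relfinrank_pClosure_image hli,
    Finset.coe_univ, Set.image_univ]

end PClosure

theorem kaehler_rank_of_char_p_general
    (p : ℕ) (k : Type*) (F : Type*) [Field k] [Field F] [Algebra k F]
    [CharP k p] (hp : p ≠ 0) [Module.Finite F Ω[F⁄k]] :
    ∃ e : ℕ,
      finrank (adjoin k {x : F | ∃ y : F, y ^ p = x}) F = p ^ e ∧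
      Module.Free F Ω[F⁄k] ∧
      finrank F Ω[F⁄k] = e ∧
      ∀ (C : Type*) [AddCommGroup C] [Module k C] [Module F C] [IsScalarTower k F C],
        Nonempty (Derivation k F C ≃ₗ[F] (Fin e → C)) := by
  have : Fact p.Prime := ⟨(CharP.char_is_prime_or_zero k p).resolve_right hp⟩
  have : CharP F p := charP_of_injective_algebraMap (algebraMap k F).injective p
  obtain ⟨ι, a, -, hspan, hli⟩ := exists_linearIndependent' F (D k F)
  rw [span_range_derivation] at hspan
  have : Finite ι := hli.finite
  have := Fintype.ofFinite ι
  let b : Basis ι F Ω[F⁄k] := .mk hli hspan.ge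
  refine ⟨Fintype.card ι, ?_, inferInstance, finrank_eq_card_basis b, fun C _ _ _ _ ↦ ⟨?_⟩⟩
  · rw [← pClosure_empty, finrank_pClosure_empty hli hspan]
  · exact (linearMapEquivDerivation k F).symm ≪≫ₗ
      ((b.reindex (Fintype.equivFin ι)).constr F).symm

end

/-- Let `k` be a field of characteristic `p > 0`, `F` a finitely generated
field extension of `k`, and `E = k F^p` the subfield of `F` generated by `k` together with the
`p`-th powers of elements of `F`.  Then there exists `e : ℕ` with `[F : E] = p ^ e` such that
`Ω¹_{F/k}` is a free `F`-module of rank `e`; equivalently, for every `F`-module `C` we have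
`Der_k(F, C) ≃ₗ[F] C ^ e`. -/
theorem kaehler_rank_of_char_p
    (p : ℕ) (k : Type u) (F : Type v) [Field k] [Field F] [Algebra k F]
    [CharP k p] (hp : p ≠ 0)
    (hfg : (⊤ : IntermediateField k F).FG) :
    ∃ e : ℕ,
      Module.finrank
        (IntermediateField.adjoin k {x : F | ∃ y : F, y ^ p = x}) F = p ^ e ∧
      Module.Free F (KaehlerDifferential k F) ∧
      Module.finrank F (KaehlerDifferential k F) = e ∧
      ∀ (C : Type v) [AddCommGroup C] [Module k C] [Module F C] [IsScalarTower k F C],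
        Nonempty ((Derivation k F C) ≃ₗ[F] (Fin e → C)) := by
  have : Algebra.EssFiniteType k F := IntermediateField.fg_top_iff.1 hfg
  exact kaehler_rank_of_char_p_general p k F hp
end

section
/- Let k be a field and n ≥ 1. The set of primes of the polynomial ring k[t₁,…,tₙ] that are maximal ideals 𝔪 whose residue field k[t₁,…,tₙ]/𝔪 is a separable (algebraic) extension of k is dense in Spec(k[t₁,…,tₙ]) with respect to the Zariski topology. -/
/-!
Let `K` be a separable closure of `k`. It is infinite: a finite field is perfect, so a finite `K`
would be algebraically closed, and algebraically closed fields are infinite. Over an infinite field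
a polynomial vanishing at every `K`-point is zero, so the kernels of the evaluations at `K`-points
form a dense set of primes. The residue ring at such a kernel embeds in `K`, which is algebraic and
separable over `k`; hence the kernel is maximal and its residue field is separable over `k`.
-/

theorem infinite_of_isSepClosed (K : Type*) [Field K] [IsSepClosed K] : Infinite K := by
  by_contra hK
  have : Finite K := not_infinite_iff_finite.mp hK
  have : IsAlgClosed K := IsSepClosed.isAlgClosed_of_perfectField K
  exact hK inferInstance

section IntegralPoints

variable {R A : Type*} [CommRing R] [CommRing A] [Algebra R A]

theorem ker_isMaximal_of_isIntegral {K : Type*} [Field K] [Algebra R K] [Algebra.IsIntegral R K]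
    (φ : A →ₐ[R] K) : (RingHom.ker φ).IsMaximal := by
  have hφ : φ.toRingHom.IsIntegral := by
    apply RingHom.IsIntegral.tower_top (algebraMap R A)
    rw [AlgHom.toRingHom_eq_coe, φ.comp_algebraMap]
    exact algebraMap_isIntegral_iff.mpr ‹_›
  have : (⊥ : Ideal K).IsMaximal := Ideal.bot_isMaximal
  exact Ideal.isMaximal_comap_of_isIntegral_of_isMaximal' φ.toRingHom hφ ⊥

theorem isSeparable_quotient_ker {B : Type*} [Ring B] [Algebra R B] [Algebra.IsSeparable R B]
    (φ : A →ₐ[R] B) : Algebra.IsSeparable R (A ⧸ RingHom.ker φ) :=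
  ⟨fun y ↦ (isSeparable_map_iff (Ideal.kerLiftAlg φ) (Ideal.kerLiftAlg_injective φ)).mp
    (Algebra.IsSeparable.isSeparable R (Ideal.kerLiftAlg φ y))⟩

end IntegralPoints

section EvaluationPoints

variable {σ R K : Type*} [CommRing K] [IsDomain K] [Infinite K]

theorem eq_zero_of_forall_aeval_eq_zero [CommSemiring R] [Algebra R K] [FaithfulSMul R K]
    {f : MvPolynomial σ R} (hf : ∀ x : σ → K, MvPolynomial.aeval x f = 0) : f = 0 := by
  apply MvPolynomial.map_injective (algebraMap R K) (FaithfulSMul.algebraMap_injective R K)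
  rw [map_zero]
  refine MvPolynomial.funext fun x ↦ ?_
  rw [MvPolynomial.eval_map, map_zero]
  exact hf x

variable (σ R K) in
theorem denseRange_ker_aeval [CommRing R] [Algebra R K] [FaithfulSMul R K] :
    DenseRange fun x : σ → K ↦ (⟨RingHom.ker (MvPolynomial.aeval (R := R) x),
      RingHom.ker_isPrime _⟩ : PrimeSpectrum (MvPolynomial σ R)) := by
  rw [DenseRange, dense_iff_closure_eq, ← PrimeSpectrum.zeroLocus_vanishingIdeal_eq_closure,
    PrimeSpectrum.zeroLocus_eq_univ_iff]
  intro f hf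
  have hf_zero : f = 0 := eq_zero_of_forall_aeval_eq_zero fun x : σ → K ↦
    (PrimeSpectrum.mem_vanishingIdeal _ f).mp hf _ (Set.mem_range_self x)
  exact hf_zero ▸ Ideal.zero_mem _

end EvaluationPoints

theorem dense_separable_maximal_spectrum_mvPolynomial_general
    (k σ : Type*) [Field k] :
    Dense {P : PrimeSpectrum (MvPolynomial σ k) |
      P.asIdeal.IsMaximal ∧
      Algebra.IsSeparable k (MvPolynomial σ k ⧸ P.asIdeal)} := by
  have : Infinite (SeparableClosure k) := infinite_of_isSepClosed _
  refine (denseRange_ker_aeval σ k (SeparableClosure k)).mono ?_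
  rintro _ ⟨x, rfl⟩
  exact ⟨ker_isMaximal_of_isIntegral (MvPolynomial.aeval x),
    isSeparable_quotient_ker (MvPolynomial.aeval x)⟩

/-- For a field `k` and `n ≥ 1`, the set of maximal ideals of
`k[t₁,…,tₙ]` whose residue field is a separable extension of `k` is dense in
`Spec k[t₁,…,tₙ]` for the Zariski topology. -/
theorem dense_separable_maximal_spectrum_mvPolynomial
    (k : Type*) [Field k] (n : ℕ) (hn : 1 ≤ n) :
    Dense {P : PrimeSpectrum (MvPolynomial (Fin n) k) |
      P.asIdeal.IsMaximal ∧
      Algebra.IsSeparable k (MvPolynomial (Fin n) k ⧸ P.asIdeal)} :=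
  dense_separable_maximal_spectrum_mvPolynomial_general k (Fin n)
end

section
/- Let k be a field with algebraic closure k̄, let A = k[x₁,…,xₙ] be a polynomial ring, and let 𝔭 be a prime ideal of A with residue field k(𝔭). Then k(𝔭) is formally smooth over k if and only if k(𝔭) ⊗_k k̄ is a reduced ring. -/
universe u

open TensorProduct

/-!
A ring `R` is reduced if and only if it is integrally closed in `R[X]`, because `x X` is nilpotent,
hence integral, for every nilpotent `x`. As smooth base change preserves integral closures, an
algebra smooth over a reduced ring is reduced. Spreading out smoothness from the local rings extends
this to formally smooth algebras essentially of finite type over a reduced Noetherian ring. Applied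
to `k̄ ⊗ K` over `k̄` it shows that finitely generated formally smooth extensions `K/k` are
geometrically reduced.

Conversely, in characteristic `q`, a relation `∑ cᵢ xᵢ ^ q = 0` in `K` makes `∑ cᵢ ^ (1 / q) ⊗ xᵢ`
nilpotent in `k̄ ⊗ K`. So if `k̄ ⊗ K` is reduced, then `k`-linearly independent elements of `K` have
`k`-linearly independent `q`-th powers. By MacLane's criterion a finitely generated extension with
this property is separably generated, hence formally smooth.
-/

section SmoothOverReduced

open Polynomial

theorem natDegree_eq_zero_of_isIntegral {R : Type*} [CommRing R] [IsReduced R] {g : R[X]}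
    (hg : IsIntegral R g) : g.natDegree = 0 := by
  nontriviality R
  obtain ⟨P, hP, hPg : P.comp g = 0⟩ := hg
  by_contra hdeg
  have hg_ne_zero : g ≠ 0 := by rintro rfl; exact hdeg natDegree_zero
  have hlead : P.leadingCoeff * g.leadingCoeff ^ P.natDegree ≠ 0 := by
    rw [hP.leadingCoeff, one_mul]
    exact pow_ne_zero _ (leadingCoeff_ne_zero.mpr hg_ne_zero)
  have hmul : P.natDegree * g.natDegree = 0 := by
    rw [← natDegree_comp_eq_of_mul_ne_zero hlead, hPg, natDegree_zero]
  have hP_eq_one : P = 1 := hP.natDegree_eq_zero.mp ((mul_eq_zero.mp hmul).resolve_right hdeg)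
  rw [hP_eq_one, one_comp] at hPg
  exact one_ne_zero hPg

theorem isReduced_iff_isIntegrallyClosedIn_polynomial {R : Type*} [CommRing R] :
    IsReduced R ↔ IsIntegrallyClosedIn R R[X] := by
  rw [isIntegrallyClosedIn_iff]
  constructor
  · refine fun _ ↦ ⟨C_injective, fun {g} hg ↦ ⟨g.coeff 0, ?_⟩⟩
    exact (eq_C_of_natDegree_eq_zero (natDegree_eq_zero_of_isIntegral hg)).symm
  · refine fun ⟨_, hclosed⟩ ↦ ⟨fun x ⟨m, hm⟩ ↦ ?_⟩
    have hint : IsIntegral R (C x * X) :=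
      ⟨X ^ m, monic_X_pow m, by simp [mul_pow, ← C_pow, hm]⟩
    obtain ⟨y, hy⟩ := hclosed hint
    simpa using congr(($hy).coeff 1).symm

theorem isIntegrallyClosedIn_tensorProduct_of_smooth (R S B : Type*) [CommRing R] [CommRing S]
    [CommRing B] [Algebra R S] [Algebra R B] [Algebra.Smooth R S] [IsIntegrallyClosedIn R B] :
    IsIntegrallyClosedIn S (S ⊗[R] B) := by
  let e : S ≃ₐ[S] integralClosure S (S ⊗[R] B) :=
    (Algebra.TensorProduct.rid R S S).symm
      |>.trans (Algebra.TensorProduct.congr .refl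
        (IsIntegralClosure.equiv R R B (integralClosure R B)))
      |>.trans (.ofBijective _ TensorProduct.toIntegralClosure_bijective_of_smooth)
  have he (s : S) : (e s : S ⊗[R] B) = algebraMap S (S ⊗[R] B) s := congr(($(e.commutes s)).1)
  refine isIntegrallyClosedIn_iff.mpr ⟨fun s t hst ↦ ?_, fun {x} hx ↦ ?_⟩
  · exact e.injective (Subtype.ext ((he s).trans (hst.trans (he t).symm)))
  · obtain ⟨s, hs⟩ := e.surjective ⟨x, hx⟩
    exact ⟨s, (he s).symm.trans congr(($hs).1)⟩

theorem isReduced_of_smooth (R S : Type*) [CommRing R] [CommRing S] [Algebra R S]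
    [Algebra.Smooth R S] [IsReduced R] : IsReduced S := by
  have : IsIntegrallyClosedIn R R[X] := isReduced_iff_isIntegrallyClosedIn_polynomial.mp ‹_›
  rw [isReduced_iff_isIntegrallyClosedIn_polynomial,
    (polyEquivTensor' R S).isIntegrallyClosedIn]
  exact isIntegrallyClosedIn_tensorProduct_of_smooth R S R[X]

end SmoothOverReduced

section FormallySmooth

theorem isReduced_of_isLocalization_of_le {R S T : Type*} [CommRing R] [CommRing S] [CommRing T]
    [Algebra R S] [Algebra R T] {M N : Submonoid R} (hMN : M ≤ N) [IsLocalization M S]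
    [IsLocalization N T] [IsReduced S] : IsReduced T := by
  let := IsLocalization.localizationAlgebraOfSubmonoidLe S T M N hMN
  have := IsLocalization.localization_isScalarTower_of_submonoid_le S T M N hMN
  have := IsLocalization.isLocalization_of_submonoid_le S T M N hMN
  let e := IsLocalization.algEquiv (N.map (algebraMap R S)) T
    (Localization (N.map (algebraMap R S)))
  exact isReduced_of_injective e e.injective

theorem isReduced_localization_of_isSmoothAt (R : Type*) {S : Type*} [CommRing R] [CommRing S]
    [Algebra R S] [Algebra.FinitePresentation R S] [IsReduced R] (p : Ideal S) [p.IsPrime]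
    [Algebra.IsSmoothAt R p] : IsReduced (Localization.AtPrime p) := by
  obtain ⟨f, hfp, _⟩ := Algebra.IsSmoothAt.exists_notMem_smooth R p
  have : IsReduced (Localization.Away f) := isReduced_of_smooth R _
  have hle : Submonoid.powers f ≤ p.primeCompl := Submonoid.powers_le.mpr hfp
  exact isReduced_of_isLocalization_of_le (S := Localization.Away f) hle

theorem isReduced_of_formallySmooth (R A : Type*) [CommRing R] [CommRing A] [Algebra R A]
    [IsNoetherianRing R] [IsReduced R] [Algebra.EssFiniteType R A] [Algebra.FormallySmooth R A] :
    IsReduced A := by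
  refine isReduced_ofLocalizationMaximal A fun m _ ↦ ?_
  let S := Algebra.EssFiniteType.subalgebra R A
  let p : Ideal S := m.comap (algebraMap S A)
  have : IsLocalization.AtPrime (Localization.AtPrime m) p :=
    IsLocalization.isLocalization_isLocalization_atPrime_isLocalization
      (Algebra.EssFiniteType.submonoid R A) _ m
  let e : Localization.AtPrime p ≃ₐ[S] Localization.AtPrime m :=
    IsLocalization.algEquiv p.primeCompl _ _
  have : Algebra.FinitePresentation R S := Algebra.FinitePresentation.of_finiteType.mp inferInstance
  have : Algebra.FormallySmooth A (Localization.AtPrime m) := .of_isLocalization m.primeCompl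
  have : Algebra.FormallySmooth R (Localization.AtPrime m) := .comp R A _
  have : Algebra.IsSmoothAt R p := .of_equiv (e.symm.restrictScalars R)
  have := isReduced_localization_of_isSmoothAt R p
  exact isReduced_of_injective e.symm e.symm.injective

theorem isGeometricallyReduced_of_formallySmooth (k A : Type*) [Field k] [CommRing A] [Algebra k A]
    [Algebra.EssFiniteType k A] [Algebra.FormallySmooth k A] :
    Algebra.IsGeometricallyReduced k A :=
  (Algebra.isGeometricallyReduced_field_iff k A).mpr
    (isReduced_of_formallySmooth (AlgebraicClosure k) _)

end FormallySmooth

section GeometricallyReduced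

variable {k A ι : Type*} [Field k] (q : ℕ) [ExpChar k q] [CommRing A] [Algebra k A] {v : ι → A}

theorem linearIndependent_pow_of_isReduced_tensorProduct {L : Type*} [CommRing L] [Nontrivial L]
    [Algebra k L] [IsReduced (L ⊗[k] A)] (hroots : ∀ a : k, ∃ b : L, b ^ q = algebraMap k L a)
    (hv : LinearIndependent k v) : LinearIndependent k (fun i ↦ v i ^ q) := by
  rw [linearIndependent_iff']
  intro s c hc i hi
  have : Nontrivial A := ⟨v i, 0, hv.ne_zero i⟩
  have : ExpChar (L ⊗[k] A) q :=
    expChar_of_injective_algebraMap (algebraMap k (L ⊗[k] A)).injective q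
  choose root hroot using hroots
  have hpow : (∑ j ∈ s, root (c j) ⊗ₜ[k] v j) ^ q = 0 := by
    calc (∑ j ∈ s, root (c j) ⊗ₜ[k] v j) ^ q
      _ = ∑ j ∈ s, (1 : L) ⊗ₜ[k] (c j • v j ^ q) := by
        simp only [sum_pow_char, Algebra.TensorProduct.tmul_pow, hroot,
          Algebra.algebraMap_eq_smul_one, TensorProduct.smul_tmul]
      _ = 0 := by rw [← TensorProduct.tmul_sum, hc, TensorProduct.tmul_zero]
  have hsum : ∑ j ∈ s, root (c j) • (1 : L) ⊗ₜ[k] v j = 0 := by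
    simpa only [TensorProduct.smul_tmul', smul_eq_mul, mul_one] using eq_zero_of_pow_eq_zero hpow
  have hv_tensor : LinearIndependent L (fun j ↦ (1 : L) ⊗ₜ[k] v j) :=
    Module.Flat.linearIndependent_one_tmul hv
  have hroot_eq_zero : root (c i) = 0 := linearIndependent_iff'.mp hv_tensor s _ hsum i hi
  have hci : algebraMap k L (c i) = 0 := by
    rw [← hroot, hroot_eq_zero, zero_pow (expChar_pos k q).ne']
  exact (map_eq_zero _).mp hci

theorem linearIndependent_pow_of_isGeometricallyReduced [Algebra.IsGeometricallyReduced k A]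
    (hv : LinearIndependent k v) : LinearIndependent k (fun i ↦ v i ^ q) :=
  have := (Algebra.isGeometricallyReduced_field_iff k A).mp ‹_›
  linearIndependent_pow_of_isReduced_tensorProduct q (L := AlgebraicClosure k)
    (fun _ ↦ IsAlgClosed.exists_pow_nat_eq _ (expChar_pos k q)) hv

end GeometricallyReduced

theorem formallySmooth_of_isGeometricallyReduced (k K : Type*) [Field k] [Field K] [Algebra k K]
    [Algebra.EssFiniteType k K] [Algebra.IsGeometricallyReduced k K] :
    Algebra.FormallySmooth k K := by
  obtain _ | ⟨q, hq, _⟩ := CharP.exists' k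
  · infer_instance
  have : ExpChar k q := .prime hq.out
  obtain ⟨s, hs, hsep⟩ :=
    exists_isTranscendenceBasis_and_isSeparable_of_linearIndepOn_pow_of_essFiniteType
      (k := k) (K := K) q hq.out fun _ ht ↦ linearIndependent_pow_of_isGeometricallyReduced q ht
  have : Algebra.IsSeparable (IntermediateField.adjoin k (Set.range ((↑) : s → K))) K := by
    convert! hsep <;> exact Subtype.range_coe
  exact .of_algebraicIndependent_of_isSeparable hs.1

theorem formallySmooth_iff_isGeometricallyReduced (k K : Type*) [Field k] [Field K] [Algebra k K]
    [Algebra.EssFiniteType k K] :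
    Algebra.FormallySmooth k K ↔ Algebra.IsGeometricallyReduced k K :=
  ⟨fun _ ↦ isGeometricallyReduced_of_formallySmooth k K,
    fun _ ↦ formallySmooth_of_isGeometricallyReduced k K⟩

theorem residueField_formallySmooth_iff_isReduced_tensor_general (k K : Type*) [Field k] [Field K]
    [Algebra k K] [Algebra.EssFiniteType k K] :
    Algebra.FormallySmooth k K ↔ IsReduced (K ⊗[k] AlgebraicClosure k) := by
  let e := Algebra.TensorProduct.comm k (AlgebraicClosure k) K
  rw [formallySmooth_iff_isGeometricallyReduced, Algebra.isGeometricallyReduced_field_iff]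
  exact ⟨fun _ ↦ isReduced_of_injective e.symm e.symm.injective,
    fun _ ↦ isReduced_of_injective e e.injective⟩

/-- Let `k` be a field with algebraic closure `k̄`, `A = k[x₁,…,xₙ]` and `𝔭` a
prime of `A` with residue field `k(𝔭)` (realized as any fraction field `κ` of `A/𝔭`).  Then
`k(𝔭)` is formally smooth over `k` iff `k(𝔭) ⊗_k k̄` is reduced. -/
theorem residueField_formallySmooth_iff_isReduced_tensor
    (k : Type u) [Field k] (n : ℕ)
    (p : Ideal (MvPolynomial (Fin n) k)) [p.IsPrime]
    (κ : Type u) [Field κ] [Algebra (MvPolynomial (Fin n) k ⧸ p) κ]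
    [IsFractionRing (MvPolynomial (Fin n) k ⧸ p) κ]
    [Algebra k κ] [IsScalarTower k (MvPolynomial (Fin n) k ⧸ p) κ] :
    Algebra.FormallySmooth k κ ↔ IsReduced (κ ⊗[k] AlgebraicClosure k) := by
  let D := MvPolynomial (Fin n) k ⧸ p
  have : Algebra.EssFiniteType D κ := .of_isLocalization κ (nonZeroDivisors D)
  have : Algebra.EssFiniteType k κ := .comp k D κ
  exact residueField_formallySmooth_iff_isReduced_tensor_general k κ
end

section
/- Let k be a field, A = k[x₁,…,xₙ] a polynomial ring, and 𝔭 a prime ideal of A with residue field k(𝔭). Then k(𝔭) is formally smooth over k if and only if there exist r ∈ ℕ, k-derivations d₁,…,d_r ∈ Der_k(A, A) and elements g₁,…,g_r ∈ A such that the images of g₁,…,g_r generate the ideal 𝔭A_𝔭 of the localization A_𝔭 and the determinant of the r×r matrix (d_i(g_j)) does not lie in 𝔭. -/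
universe u

/-!
Let `P → K` be a surjection of a formally smooth `k`-algebra onto a field, with kernel `I`. Then
`K` is formally smooth over `k` iff the conormal map `I/I² → K ⊗ Ω[P/k]` is injective, that is,
iff its dual `Der_k(P, K) → Hom_P(I, K)` is surjective: every `P`-linear map `I → K` is the
restriction of a derivation. This is applied to `A_𝔭 → k(𝔭)`.

If `g₁,…,g_r` generate `𝔭A_𝔭`, a linear map `𝔭A_𝔭 → k(𝔭)` is determined by its values on the `gⱼ`.
When the Jacobian matrix is invertible modulo `𝔭`, combinations of the `dᵢ` attain arbitrary values
there, so the dual conormal map is surjective.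

Conversely, take `gⱼ ∈ 𝔭` whose classes form a basis of the cotangent space of `A_𝔭`. The dual basis
is induced by derivations `δᵢ : A → k(𝔭)`. As `Ω[A/k]` is finite projective, clearing denominators
lifts some `sᵢ δᵢ` with `sᵢ ∉ 𝔭` to a derivation of `A`, and the Jacobian matrix of these lifts is
diagonal modulo `𝔭` with entries `sᵢ`.
-/

open Algebra KaehlerDifferential TensorProduct

section ConormalDual

variable {k P K : Type*} [CommRing k] [CommRing P] [Algebra k P]

section Ring

variable [CommRing K] [Algebra P K] [Algebra k K] {I : Ideal P}

variable (k) in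
/-- The restriction map `Der_k(P, K) → Hom_P(I, K)`, for `I` the kernel of `P → K`: the `K`-dual of
the conormal map `I/I² → K ⊗ Ω[P/k]`. The ideal `I` is a separate variable so that it can be, for
instance, the maximal ideal of a local ring. -/
def conormalDual (hI : I = RingHom.ker (algebraMap P K)) :
    Derivation k P K →ₗ[K] (I →ₗ[P] K) where
  toFun δ :=
    { toFun x := δ x
      map_add' x y := map_add δ (x : P) y
      map_smul' a x := by
        have hx : algebraMap P K x = 0 := hI.le x.2
        simp [Algebra.smul_def, hx] }
  map_add' _ _ := rfl
  map_smul' _ _ := rfl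

@[simp]
lemma conormalDual_apply (hI : I = RingHom.ker (algebraMap P K)) (δ : Derivation k P K) (x : I) :
    conormalDual k hI δ x = δ x := rfl

lemma conormalDual_surjective_of_isUnit_det {ι : Type*} [Fintype ι] [DecidableEq ι]
    (hI : I = RingHom.ker (algebraMap P K)) {g : ι → I}
    (hg : Ideal.span (Set.range fun i ↦ (g i : P)) = I)
    (δ : ι → Derivation k P K) (hδ : IsUnit (Matrix.of fun i j ↦ δ i (g j)).det) :
    Function.Surjective (conormalDual k hI) := by
  intro φ
  replace hg : Submodule.span P (Set.range g) = ⊤ :=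
    (Submodule.span_range_subtype_eq_top_iff I fun i ↦ (g i).2).mpr hg
  let J : Matrix ι ι K := Matrix.of fun i j ↦ δ i (g j)
  let c : ι → K := Matrix.vecMul (fun j ↦ φ (g j)) J⁻¹
  refine ⟨∑ i, c i • δ i, LinearMap.ext_on_range hg fun j ↦ ?_⟩
  have hc : Matrix.vecMul c J = fun j ↦ φ (g j) := by
    rw [Matrix.vecMul_vecMul, Matrix.nonsing_inv_mul J hδ, Matrix.vecMul_one]
  simpa [J, Matrix.vecMul, dotProduct] using congrFun hc j

variable [IsScalarTower k P K]

lemma conormalDual_surjective_of_formallySmooth [FormallySmooth k P] [FormallySmooth k K]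
    (hI : I = RingHom.ker (algebraMap P K)) (hK : Function.Surjective (algebraMap P K)) :
    Function.Surjective (conormalDual k hI) := by
  subst hI
  intro φ
  obtain ⟨l, hl⟩ := (FormallySmooth.iff_split_injection (R := k) hK).mp inferInstance
  have hφ (x y : RingHom.ker (algebraMap P K)) : φ (x * y) = 0 := by
    have hx : algebraMap P K x = 0 := x.2
    rw [show x * y = (x : P) • y from rfl, map_smul, Algebra.smul_def, hx, zero_mul]
  refine ⟨(Ideal.Cotangent.lift φ hφ ∘ₗ l ∘ₗ TensorProduct.mk P K Ω[P⁄k] 1).compDer (D k P), ?_⟩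
  ext x
  have hlx : l (1 ⊗ₜ D k P x) = Ideal.toCotangent _ x :=
    LinearMap.congr_fun hl (Ideal.toCotangent _ x)
  simp [hlx]

end Ring

lemma toCotangent_eq_zero_of_forall_linearMap {I : Ideal P} [I.IsMaximal] {x : I}
    (hx : ∀ φ : I →ₗ[P] P ⧸ I, φ x = 0) : I.toCotangent x = 0 := by
  let := Ideal.Quotient.field I
  exact (Module.forall_dual_apply_eq_zero_iff (P ⧸ I) _).mp fun f ↦
    hx (f.restrictScalars P ∘ₗ I.toCotangent)

variable [Field K] [Algebra P K] [Algebra k K] [IsScalarTower k P K] {I : Ideal P}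

theorem formallySmooth_iff_conormalDual_surjective [FormallySmooth k P]
    (hI : I = RingHom.ker (algebraMap P K)) (hK : Function.Surjective (algebraMap P K)) :
    FormallySmooth k K ↔ Function.Surjective (conormalDual k hI) := by
  refine ⟨fun _ ↦ conormalDual_surjective_of_formallySmooth hI hK, fun hsurj ↦ ?_⟩
  subst hI
  suffices Function.Injective (kerCotangentToTensor k P K) from
    ⟨inferInstance, (FormallySmooth.kerCotangentToTensor_injective_iff hK).mp this⟩
  rw [injective_iff_map_eq_zero]
  intro y hy
  obtain ⟨x, rfl⟩ := Ideal.toCotangent_surjective _ y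
  have := RingHom.ker_isMaximal_of_surjective (algebraMap P K) hK
  refine toCotangent_eq_zero_of_forall_linearMap fun φ ↦ ?_
  let ι : (P ⧸ RingHom.ker (algebraMap P K)) →ₗ[P] K :=
    (Ideal.kerLiftAlg (Algebra.ofId P K)).toLinearMap
  have hι : Function.Injective ι := Ideal.kerLiftAlg_injective _
  obtain ⟨δ, hδ⟩ := hsurj (ι ∘ₗ φ)
  refine hι ?_
  calc ι (φ x) = δ x := (LinearMap.congr_fun hδ x).symm
    _ = δ.liftKaehlerDifferential.liftBaseChange K (kerCotangentToTensor k P K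
          (Ideal.toCotangent _ x)) := by simp
    _ = ι 0 := by rw [hy, map_zero, map_zero]

end ConormalDual

section Localization

variable {k A : Type*} [CommRing k] [CommRing A] [Algebra k A]

lemma exists_derivation_compAlgebraMap_eq {B N : Type*} [CommRing B] [Algebra k B] [Algebra A B]
    [IsScalarTower k A B] [FormallyEtale A B] [AddCommGroup N] [Module k N] [Module A N]
    [Module B N] [IsScalarTower k A N] [IsScalarTower A B N] [IsScalarTower k B N]
    (d : Derivation k A N) :
    ∃ δ : Derivation k B N, δ.compAlgebraMap A = d := by
  refine ⟨(d.liftKaehlerDifferential.liftBaseChange B ∘ₗ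
    (tensorKaehlerEquivOfFormallyEtale k A B).symm.toLinearMap).compDer (D k B), ?_⟩
  ext a
  simp [tensorKaehlerEquivOfFormallyEtale_symm_D_algebraMap]

lemma exists_derivation_lift_smul (S : Submonoid A) (B : Type*) {K : Type*} [CommRing B]
    [Algebra A B] [IsLocalization S B] [CommRing K] [Algebra A K] [Algebra B K]
    [IsScalarTower A B K] [Algebra k K] [IsScalarTower k A K] [Module.Finite A Ω[A⁄k]]
    [Module.Projective A Ω[A⁄k]] (hK : Function.Surjective (algebraMap B K))
    (δ : Derivation k A K) :
    ∃ (s : S) (d : Derivation k A A), ∀ a, algebraMap A K (d a) = algebraMap A K s * δ a := by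
  obtain ⟨f, hf⟩ := Module.projective_lifting_property
    (IsScalarTower.toAlgHom A B K).toLinearMap δ.liftKaehlerDifferential hK
  have := Module.finitePresentation_of_projective A Ω[A⁄k]
  obtain ⟨h, s, hs⟩ := Module.FinitePresentation.exists_lift_of_isLocalizedModule S
    (Algebra.linearMap A B) f
  refine ⟨s, h.compDer (D k A), fun a ↦ ?_⟩
  have hfa : algebraMap B K (f (D k A a)) = δ a := by
    simpa using LinearMap.congr_fun hf (D k A a)
  have hsa : algebraMap A B (h (D k A a)) = algebraMap A B s * f (D k A a) := by
    simpa [Submonoid.smul_def, Algebra.smul_def] using LinearMap.congr_fun hs (D k A a)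
  calc algebraMap A K (h (D k A a)) = algebraMap B K (algebraMap A B (h (D k A a))) :=
        IsScalarTower.algebraMap_apply A B K _
    _ = algebraMap A K s * δ a := by
        rw [hsa, map_mul, hfa, ← IsScalarTower.algebraMap_apply]

end Localization

lemma exists_generators_dual_linearMap {R : Type*} [CommRing R] [IsLocalRing R]
    [IsNoetherianRing R] {s : Set R} (hs : Ideal.span s = IsLocalRing.maximalIdeal R) :
    ∃ (r : ℕ) (g : Fin r → IsLocalRing.maximalIdeal R)
      (φ : Fin r → IsLocalRing.maximalIdeal R →ₗ[R] IsLocalRing.ResidueField R),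
      (∀ i, (g i : R) ∈ s) ∧
      Ideal.span (Set.range fun i ↦ (g i : R)) = IsLocalRing.maximalIdeal R ∧
      ∀ i j, φ i (g j) = if i = j then 1 else 0 := by
  let s' : Set (IsLocalRing.maximalIdeal R) := Subtype.val ⁻¹' s
  have hs' : Submodule.span R s' = ⊤ := by
    have hs_val : Subtype.val '' s' = s :=
      (Subtype.image_preimage_coe _ s).trans (Set.inter_eq_right.mpr (hs ▸ Ideal.subset_span))
    rwa [← Submodule.span_val_image_eq_iff, hs_val]
  obtain ⟨v, hvs, hvspan, hvli⟩ := Submodule.exists_fun_fin_finrank_span_eq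
    (IsLocalRing.ResidueField R) ((IsLocalRing.maximalIdeal R).toCotangent '' s')
  replace hvspan := hvspan.trans (IsLocalRing.CotangentSpace.span_image_eq_top_iff.mpr hs')
  choose g hgs hg using hvs
  let b := Module.Basis.mk hvli hvspan.ge
  refine ⟨_, g, fun i ↦ (b.coord i).restrictScalars R ∘ₗ Ideal.toCotangent _, hgs, ?_, ?_⟩
  · refine (Submodule.span_range_subtype_eq_top_iff _ fun i ↦ (g i).2).mp ?_
    rw [← IsLocalRing.CotangentSpace.span_image_eq_top_iff, ← Set.range_comp]
    convert hvspan
    exact funext hg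
  · intro i j
    have hb : Ideal.toCotangent _ (g j) = b j := by rw [hg, Module.Basis.mk_apply]
    rw [LinearMap.comp_apply, hb, LinearMap.restrictScalars_apply, Module.Basis.coord_apply,
      Module.Basis.repr_self, Finsupp.single_apply]
    exact if_congr eq_comm rfl rfl

section Jacobian

variable {k A : Type*} [CommRing k] [CommRing A] [Algebra k A] [FormallySmooth k A]
  {p : Ideal A} [p.IsPrime]

variable (k p) in
lemma formallySmooth_residueField_iff_conormalDual_surjective :
    FormallySmooth k p.ResidueField ↔
      Function.Surjective (conormalDual k (K := p.ResidueField)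
        (IsLocalRing.ker_residue (R := Localization.AtPrime p)).symm) := by
  have := FormallySmooth.of_isLocalization (R := A) (Rₘ := Localization.AtPrime p) p.primeCompl
  have := FormallySmooth.comp k A (Localization.AtPrime p)
  exact formallySmooth_iff_conormalDual_surjective _ IsLocalRing.residue_surjective

theorem formallySmooth_residueField_of_det_notMem {ι : Type*} [Fintype ι] [DecidableEq ι]
    (d : ι → Derivation k A A) (g : ι → A)
    (hg : p.map (algebraMap A (Localization.AtPrime p)) =
      Ideal.span (Set.range fun i ↦ algebraMap A (Localization.AtPrime p) (g i)))
    (hdet : (Matrix.of fun i j ↦ d i (g j)).det ∉ p) :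
    FormallySmooth k p.ResidueField := by
  have := FormallyEtale.of_isLocalization (R := A) (Rₘ := Localization.AtPrime p) p.primeCompl
  rw [Localization.AtPrime.map_eq_maximalIdeal] at hg
  let g' (i : ι) : IsLocalRing.maximalIdeal (Localization.AtPrime p) :=
    ⟨algebraMap A _ (g i), hg.ge (Ideal.subset_span (Set.mem_range_self i))⟩
  choose δ hδ using fun i ↦ exists_derivation_compAlgebraMap_eq (B := Localization.AtPrime p)
    ((Algebra.linearMap A p.ResidueField).compDer (d i))
  have hδg (i j : ι) : δ i (g' j) = algebraMap A p.ResidueField (d i (g j)) :=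
    DFunLike.congr_fun (hδ i) (g j)
  rw [formallySmooth_residueField_iff_conormalDual_surjective]
  refine conormalDual_surjective_of_isUnit_det _ (g := g') hg.symm δ (IsUnit.mk0 _ ?_)
  simp only [hδg]
  rwa [← Ideal.algebraMap_residueField_eq_zero, RingHom.map_det] at hdet

variable (k p) in
theorem exists_jacobian_of_formallySmooth_residueField [IsNoetherianRing A]
    [Module.Finite A Ω[A⁄k]] [FormallySmooth k p.ResidueField] :
    ∃ (r : ℕ) (d : Fin r → Derivation k A A) (g : Fin r → A),
      p.map (algebraMap A (Localization.AtPrime p)) =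
        Ideal.span (Set.range fun i ↦ algebraMap A (Localization.AtPrime p) (g i)) ∧
      (Matrix.of fun i j ↦ d i (g j)).det ∉ p := by
  have := IsLocalization.isNoetherianRing p.primeCompl (Localization.AtPrime p) inferInstance
  obtain ⟨r, x, φ, hxp, hx, hφ⟩ :=
    exists_generators_dual_linearMap (Localization.AtPrime.map_eq_maximalIdeal (I := p))
  choose g _ hg using hxp
  choose δ hδ using fun i ↦
    (formallySmooth_residueField_iff_conormalDual_surjective k p).mp inferInstance (φ i)
  choose t d hd using fun i ↦ exists_derivation_lift_smul p.primeCompl (Localization.AtPrime p)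
    IsLocalRing.residue_surjective ((δ i).compAlgebraMap A)
  have hdg (i j : Fin r) : algebraMap A p.ResidueField (d i (g j)) =
      Matrix.diagonal (fun i ↦ algebraMap A p.ResidueField (t i)) i j := by
    have hδg : δ i (x j) = if i = j then 1 else 0 :=
      (LinearMap.congr_fun (hδ i) (x j)).trans (hφ i j)
    rw [hd, Derivation.compAlgebraMap_apply, hg, hδg, Matrix.diagonal_apply, mul_ite, mul_one,
      mul_zero]
  refine ⟨r, d, g, ?_, ?_⟩
  · simp only [hg]
    rw [Localization.AtPrime.map_eq_maximalIdeal, hx]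
  · rw [← Ideal.algebraMap_residueField_eq_zero, RingHom.map_det]
    have hJ : (algebraMap A p.ResidueField).mapMatrix (Matrix.of fun i j ↦ d i (g j)) =
        Matrix.diagonal fun i ↦ algebraMap A p.ResidueField (t i) := Matrix.ext hdg
    rw [hJ, Matrix.det_diagonal]
    exact Finset.prod_ne_zero_iff.mpr fun i _ ↦ mt Ideal.algebraMap_residueField_eq_zero.mp (t i).2

variable (k p) in
theorem residueField_formallySmooth_iff_jacobian_general [IsNoetherianRing A]
    [Module.Finite A Ω[A⁄k]] (κ : Type*) [Field κ] [Algebra (A ⧸ p) κ] [IsFractionRing (A ⧸ p) κ]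
    [Algebra k κ] [IsScalarTower k (A ⧸ p) κ] :
    FormallySmooth k κ ↔
      ∃ (r : ℕ) (d : Fin r → Derivation k A A) (g : Fin r → A),
        p.map (algebraMap A (Localization.AtPrime p)) =
          Ideal.span (Set.range fun i ↦ algebraMap A (Localization.AtPrime p) (g i)) ∧
        (Matrix.of fun i j ↦ d i (g j)).det ∉ p := by
  let e : κ ≃ₐ[k] p.ResidueField :=
    (IsLocalization.algEquiv (nonZeroDivisors (A ⧸ p)) κ p.ResidueField).restrictScalars k
  rw [FormallySmooth.iff_of_equiv e]
  exact ⟨fun _ ↦ exists_jacobian_of_formallySmooth_residueField k p,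
    fun ⟨_, d, g, hg, hdet⟩ ↦ formallySmooth_residueField_of_det_notMem d g hg hdet⟩

end Jacobian

/-- Let `k` be a field, `A = k[x₁,…,xₙ]` and `𝔭` a prime of `A` with residue
field `k(𝔭)` (realized as any fraction field `κ` of `A/𝔭`).  Then `k(𝔭)` is formally smooth
over `k` iff there are `r : ℕ`, derivations `d₁,…,d_r ∈ Der_k(A,A)` and `g₁,…,g_r ∈ A` whose
images generate `𝔭A_𝔭` and with `det (dᵢ gⱼ) ∉ 𝔭`. -/
theorem residueField_formallySmooth_iff_jacobian
    (k : Type u) [Field k] (n : ℕ)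
    (p : Ideal (MvPolynomial (Fin n) k)) [p.IsPrime]
    (κ : Type u) [Field κ] [Algebra (MvPolynomial (Fin n) k ⧸ p) κ]
    [IsFractionRing (MvPolynomial (Fin n) k ⧸ p) κ]
    [Algebra k κ] [IsScalarTower k (MvPolynomial (Fin n) k ⧸ p) κ] :
    Algebra.FormallySmooth k κ ↔
      ∃ (r : ℕ) (d : Fin r → Derivation k (MvPolynomial (Fin n) k) (MvPolynomial (Fin n) k))
        (g : Fin r → MvPolynomial (Fin n) k),
        p.map (algebraMap (MvPolynomial (Fin n) k) (Localization.AtPrime p)) =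
          Ideal.span (Set.range fun i =>
            algebraMap (MvPolynomial (Fin n) k) (Localization.AtPrime p) (g i)) ∧
        (Matrix.of fun i j => d i (g j)).det ∉ p :=
  residueField_formallySmooth_iff_jacobian_general k p κ
end

section
/- Let k be a field, A = k[x₁,…,xₙ], 𝔭 a prime ideal of A, and s ≥ 2 an integer. Assume the residue field k(𝔭) is formally smooth over k (equivalently, separably generated over k), and that char(k) is either 0 or greater than s. Let d₁,…,d_r ∈ Der_k(A, A) and g₁,…,g_r ∈ 𝔭 be such that the images of the g_i generate 𝔭A_𝔭 and det((d_i(g_j))_{i,j}) ∉ 𝔭. Then for every f ∈ A: the image of f lies in 𝔭^s A_𝔭 if and only if the image of f lies in 𝔭^{s−1} A_𝔭 and, for every i ∈ {1,…,r}, the image of d_i(f) lies in 𝔭^{s−1} A_𝔭. -/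
/-!
Derivations extend uniquely along the localization map, which is formally étale, so one may work
in `B = A_𝔭` with `I = (g₁, …, g_r)` and `M = (dᵢ gⱼ)` invertible over `B`.

A derivation sends `I ^ (t + 1)` into `I ^ t` by the Leibniz rule. Conversely, the derivations
`∑ₗ (M⁻¹)ᵢₗ dₗ` behave like `∂/∂gᵢ`, so `E = ∑ᵢ gᵢ ∑ₗ (M⁻¹)ᵢₗ dₗ` is an Euler derivation: it fixes
every `gⱼ` and therefore acts on `I ^ t / I ^ (t + 1)` as multiplication by `t`. If `x ∈ I ^ t` and
all `dₗ x ∈ I ^ t`, then `E x ∈ I ^ (t + 1)`, hence `t x ∈ I ^ (t + 1)`; take `t = s - 1`, which is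
invertible by the assumption on the characteristic.
-/

universe u

section PowersOfIdeals

variable {R A : Type*} [CommRing R] [CommRing A] [Algebra R A]

theorem derivation_apply_mem_pow_smul_top {M : Type*} [AddCommGroup M] [Module A M] [Module R M]
    (D : Derivation R A M) (I : Ideal A) (t : ℕ) {x : A} (hx : x ∈ I ^ (t + 1)) :
    D x ∈ I ^ t • (⊤ : Submodule A M) := by
  induction t generalizing x with
  | zero => simp
  | succ t ih =>
    rw [pow_succ] at hx
    induction hx using Submodule.mul_induction_on' with
    | mem_mul_mem a ha b hb =>
      have hbDa : b • D a ∈ I ^ (t + 1) • (⊤ : Submodule A M) := by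
        rw [pow_succ', mul_smul]
        exact Submodule.smul_mem_smul hb (ih ha)
      rw [D.leibniz]
      exact add_mem (Submodule.smul_mem_smul ha trivial) hbDa
    | add a _ b _ ha hb =>
      rw [map_add]
      exact add_mem ha hb

theorem derivation_apply_mem_pow (D : Derivation R A A) (I : Ideal A) (t : ℕ) {x : A}
    (hx : x ∈ I ^ (t + 1)) : D x ∈ I ^ t := by
  simpa using derivation_apply_mem_pow_smul_top D I t hx

theorem derivation_apply_sub_self_mem_span_sq {G : Set A} {E : Derivation R A A}
    (hE : ∀ x, E x ∈ Ideal.span G) (hG : ∀ y ∈ G, E y = y) {x : A} (hx : x ∈ Ideal.span G) :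
    E x - x ∈ Ideal.span G ^ 2 := by
  induction hx using Submodule.span_induction with
  | mem y hy => simp [hG y hy]
  | zero => simp
  | add y z _ _ hy hz =>
    rw [map_add, add_sub_add_comm]
    exact add_mem hy hz
  | smul a y hy ih =>
    have hyEa : y * E a ∈ Ideal.span G ^ 2 := by
      rw [pow_two]
      exact Ideal.mul_mem_mul hy (hE a)
    have expand : E (a • y) - a • y = a * (E y - y) + y * E a := by
      simp only [smul_eq_mul, Derivation.leibniz]
      ring
    rw [expand]
    exact add_mem (Ideal.mul_mem_left _ a ih) hyEa

theorem derivation_apply_sub_natCast_mul_mem_pow_succ {I : Ideal A} {E : Derivation R A A}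
    (hE : ∀ x, E x ∈ I) (hI : ∀ x ∈ I, E x - x ∈ I ^ 2) (t : ℕ) {x : A} (hx : x ∈ I ^ t) :
    E x - t * x ∈ I ^ (t + 1) := by
  induction t generalizing x with
  | zero => simpa using hE x
  | succ t ih =>
    rw [pow_succ] at hx
    induction hx using Submodule.mul_induction_on' with
    | mem_mul_mem a ha b hb =>
      have expand : E (a * b) - (t + 1 : ℕ) * (a * b) =
          (E a - t * a) * b + a * (E b - b) := by
        simp only [smul_eq_mul, Derivation.leibniz]
        push_cast
        ring
      rw [expand]
      refine add_mem ?_ ?_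
      · rw [pow_succ]
        exact Ideal.mul_mem_mul (ih ha) hb
      · rw [add_assoc, pow_add]
        exact Ideal.mul_mem_mul ha (hI b hb)
    | add a _ b _ ha hb =>
      rw [map_add, mul_add, add_sub_add_comm]
      exact add_mem ha hb

end PowersOfIdeals

section EulerDerivation

variable {R A ι : Type*} [CommRing R] [CommRing A] [Algebra R A]

theorem derivation_sum_apply {M : Type*} [AddCommGroup M] [Module A M] [Module R M]
    (S : Finset ι) (D : ι → Derivation R A M) (x : A) : (∑ i ∈ S, D i) x = ∑ i ∈ S, D i x := by
  simp only [← Derivation.coeFnAddMonoidHom_apply, map_sum, Finset.sum_apply]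

variable [Fintype ι] [DecidableEq ι] {D : ι → Derivation R A A} {g : ι → A}

/-- The Euler derivation `∑ᵢ gᵢ ∂/∂gᵢ`, where `∂/∂gᵢ = ∑ₗ (M⁻¹)ᵢₗ Dₗ` for the Jacobian matrix
`M = (Dᵢ gⱼ)`. It is meaningful only when `det M` is a unit: otherwise `M⁻¹ = 0`. -/
noncomputable def eulerDerivation (D : ι → Derivation R A A) (g : ι → A) : Derivation R A A :=
  ∑ i, g i • ∑ l, (Matrix.of fun i j => D i (g j))⁻¹ i l • D l

theorem eulerDerivation_apply (x : A) :
    eulerDerivation D g x =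
      ∑ i, g i * ∑ l, (Matrix.of fun i j => D i (g j))⁻¹ i l * D l x := by
  simp only [eulerDerivation, derivation_sum_apply, Derivation.smul_apply, smul_eq_mul]

theorem eulerDerivation_apply_mem_span_mul {J : Ideal A} {x : A} (hx : ∀ i, D i x ∈ J) :
    eulerDerivation D g x ∈ Ideal.span (Set.range g) * J := by
  rw [eulerDerivation_apply]
  exact sum_mem fun i _ => Ideal.mul_mem_mul (Ideal.subset_span ⟨i, rfl⟩)
    (sum_mem fun l _ => Ideal.mul_mem_left _ _ (hx l))

theorem eulerDerivation_apply_mem_span (x : A) :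
    eulerDerivation D g x ∈ Ideal.span (Set.range g) := by
  simpa using eulerDerivation_apply_mem_span_mul (J := ⊤) (D := D) (g := g) (x := x)

theorem eulerDerivation_apply_generator (hdet : IsUnit (Matrix.of fun i j => D i (g j)).det)
    (j : ι) : eulerDerivation D g (g j) = g j := by
  have inv_mul (i : ι) : ∑ l, (Matrix.of fun i j => D i (g j))⁻¹ i l * D l (g j) =
      (1 : Matrix ι ι A) i j := by
    rw [← Matrix.nonsing_inv_mul _ hdet, Matrix.mul_apply]
    rfl
  simp [eulerDerivation_apply, inv_mul, Matrix.one_apply]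

theorem eulerDerivation_apply_sub_natCast_mul_mem
    (hdet : IsUnit (Matrix.of fun i j => D i (g j)).det) (t : ℕ) {x : A}
    (hx : x ∈ Ideal.span (Set.range g) ^ t) :
    eulerDerivation D g x - t * x ∈ Ideal.span (Set.range g) ^ (t + 1) :=
  derivation_apply_sub_natCast_mul_mem_pow_succ eulerDerivation_apply_mem_span
    (fun _ => derivation_apply_sub_self_mem_span_sq eulerDerivation_apply_mem_span
      (Set.forall_mem_range.2 (eulerDerivation_apply_generator hdet))) t hx

theorem mem_span_pow_succ_iff_of_isUnit_det
    (hdet : IsUnit (Matrix.of fun i j => D i (g j)).det) {t : ℕ} (ht : IsUnit (t : A)) {x : A} :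
    x ∈ Ideal.span (Set.range g) ^ (t + 1) ↔
      x ∈ Ideal.span (Set.range g) ^ t ∧ ∀ i, D i x ∈ Ideal.span (Set.range g) ^ t := by
  refine ⟨fun hx => ⟨Ideal.pow_le_pow_right t.le_succ hx,
    fun i => derivation_apply_mem_pow (D i) _ t hx⟩, fun ⟨hx, hDx⟩ => ?_⟩
  have euler_mem : eulerDerivation D g x ∈ Ideal.span (Set.range g) ^ (t + 1) := by
    rw [pow_succ']
    exact eulerDerivation_apply_mem_span_mul hDx
  have natCast_mul_mem : t * x ∈ Ideal.span (Set.range g) ^ (t + 1) :=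
    (Submodule.sub_mem_iff_right _ euler_mem).1
      (eulerDerivation_apply_sub_natCast_mul_mem hdet t hx)
  exact (Ideal.unit_mul_mem_iff_mem _ ht).1 natCast_mul_mem

end EulerDerivation

section FormallyEtale

variable {R A B : Type*} [CommRing R] [CommRing A] [CommRing B]
  [Algebra R A] [Algebra R B] [Algebra A B] [IsScalarTower R A B] [Algebra.FormallyEtale A B]

theorem exists_derivation_apply_algebraMap_eq {M : Type*} [AddCommGroup M] [Module R M]
    [Module A M] [Module B M] [IsScalarTower R A M] [IsScalarTower R B M] [IsScalarTower A B M]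
    (D : Derivation R A M) :
    ∃ D' : Derivation R B M, ∀ a, D' (algebraMap A B a) = D a := by
  refine ⟨(D.liftKaehlerDifferential.liftBaseChange B ∘ₗ
    (KaehlerDifferential.tensorKaehlerEquivOfFormallyEtale R A B).symm.toLinearMap).compDer
      (KaehlerDifferential.D R B), fun a => ?_⟩
  simp [KaehlerDifferential.tensorKaehlerEquivOfFormallyEtale_symm_D_algebraMap]

theorem mem_pow_iff_mem_pow_pred_and_derivation_general {ι : Type*} [Fintype ι] [DecidableEq ι]
    {p : Ideal A} {d : ι → Derivation R A A} {g : ι → A}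
    (hgen : p.map (algebraMap A B) = Ideal.span (Set.range fun i => algebraMap A B (g i)))
    (hdet : IsUnit (algebraMap A B (Matrix.of fun i j => d i (g j)).det))
    {t : ℕ} (ht : IsUnit (t : B)) (f : A) :
    algebraMap A B f ∈ p.map (algebraMap A B) ^ (t + 1) ↔
      algebraMap A B f ∈ p.map (algebraMap A B) ^ t ∧
        ∀ i, algebraMap A B (d i f) ∈ p.map (algebraMap A B) ^ t := by
  choose D hD using fun i =>
    exists_derivation_apply_algebraMap_eq (B := B) ((Algebra.linearMap A B).compDer (d i))
  replace hD (i : ι) (a : A) : D i (algebraMap A B a) = algebraMap A B (d i a) := hD i a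
  have hdetD : IsUnit (Matrix.of fun i j => D i (algebraMap A B (g j))).det := by
    simp only [hD]
    rwa [RingHom.map_det] at hdet
  simpa only [hgen, hD] using mem_span_pow_succ_iff_of_isUnit_det hdetD ht (x := algebraMap A B f)

end FormallyEtale

theorem natCast_ne_zero_of_lt_ringChar {R : Type*} [NonAssocSemiring R] {t : ℕ} (ht : t ≠ 0)
    (h : ringChar R = 0 ∨ t < ringChar R) : (t : R) ≠ 0 := by
  rw [Ne, ringChar.spec]
  rcases h with h | h
  · rwa [h, zero_dvd_iff]
  · exact Nat.not_dvd_of_pos_of_lt (Nat.pos_of_ne_zero ht) h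

/-- Let `A = k[x₁,…,xₙ]`, `𝔭` a prime of `A` with separably generated
(= formally smooth) residue field `k(𝔭)`, `s ≥ 2`, and `char k = 0` or `char k > s`.  Given
`d₁,…,d_r ∈ Der_k(A,A)` and `g₁,…,g_r ∈ 𝔭` whose images generate `𝔭A_𝔭` with
`det (dᵢ gⱼ) ∉ 𝔭`, we have for every `f ∈ A`:
`f ∈ 𝔭^s A_𝔭` iff `f ∈ 𝔭^{s-1} A_𝔭` and `dᵢ f ∈ 𝔭^{s-1} A_𝔭` for all `i`. -/
theorem mem_pow_iff_mem_pow_pred_and_derivation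
    (k : Type u) [Field k] (n : ℕ)
    (p : Ideal (MvPolynomial (Fin n) k)) [p.IsPrime]
    (s : ℕ) (hs : 2 ≤ s)
    (κ : Type u) [Field κ] [Algebra (MvPolynomial (Fin n) k ⧸ p) κ]
    [IsFractionRing (MvPolynomial (Fin n) k ⧸ p) κ]
    [Algebra k κ] [IsScalarTower k (MvPolynomial (Fin n) k ⧸ p) κ]
    (hfs : Algebra.FormallySmooth k κ)
    (hchar : ringChar k = 0 ∨ s < ringChar k)
    (r : ℕ) (d : Fin r → Derivation k (MvPolynomial (Fin n) k) (MvPolynomial (Fin n) k))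
    (g : Fin r → MvPolynomial (Fin n) k) (hg : ∀ i, g i ∈ p)
    (hgen : p.map (algebraMap (MvPolynomial (Fin n) k) (Localization.AtPrime p)) =
      Ideal.span (Set.range fun i =>
        algebraMap (MvPolynomial (Fin n) k) (Localization.AtPrime p) (g i)))
    (hdet : (Matrix.of fun i j => d i (g j)).det ∉ p) :
    ∀ f : MvPolynomial (Fin n) k,
      algebraMap (MvPolynomial (Fin n) k) (Localization.AtPrime p) f ∈
          (p.map (algebraMap (MvPolynomial (Fin n) k) (Localization.AtPrime p))) ^ s ↔
        (algebraMap (MvPolynomial (Fin n) k) (Localization.AtPrime p) f ∈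
            (p.map (algebraMap (MvPolynomial (Fin n) k) (Localization.AtPrime p))) ^ (s - 1) ∧
          ∀ i, algebraMap (MvPolynomial (Fin n) k) (Localization.AtPrime p) (d i f) ∈
            (p.map (algebraMap (MvPolynomial (Fin n) k) (Localization.AtPrime p))) ^ (s - 1)) := by
  obtain ⟨t, rfl⟩ := Nat.exists_eq_add_of_le' (one_le_two.trans hs)
  have : Algebra.FormallyEtale (MvPolynomial (Fin n) k) (Localization.AtPrime p) :=
    .of_isLocalization p.primeCompl
  have ht : IsUnit (t : Localization.AtPrime p) := by
    have htk : (t : k) ≠ 0 :=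
      natCast_ne_zero_of_lt_ringChar (by lia) (hchar.imp_right t.lt_succ_self.trans)
    simpa using htk.isUnit.map (algebraMap k (Localization.AtPrime p))
  exact mem_pow_iff_mem_pow_pred_and_derivation_general hgen
    ((IsLocalization.AtPrime.isUnit_to_map_iff _ p _).2 hdet) ht
end

section
/- Let k be a field, s ≥ 1 an integer, A = k[x₁,…,xₙ] a polynomial ring, and 𝔭 a prime ideal of A. Assume the residue field k(𝔭) is formally smooth over k (equivalently, separably generated over k), and that char(k) is either 0 or greater than s. Then for every f ∈ A: the image of f lies in 𝔭^{s+1} A_𝔭 if and only if the image of f lies in 𝔭^s A_𝔭 and, for every i ∈ {1,…,n}, the image of the partial derivative ∂f/∂x_i lies in 𝔭^s A_𝔭. (This computes the kernel of the Taylor morphism of order s at 𝔭.) -/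
universe u

/-!
Let `R` be formally smooth over `k` and `I` an ideal of `R` with `R ⧸ I` formally smooth over `k`.
Then `I/I² → (R ⧸ I) ⊗ Ω[R⁄k]` is split injective, and since `Ω[R⁄k]` is projective a splitting
lifts to a derivation `E : R → I` inducing the identity on `I/I²`. By the Leibniz rule `E` acts on
`I ^ s / I ^ (s + 1)` as multiplication by `s`. If `x ∈ I ^ s` and `dx ∈ I ^ s Ω[R⁄k]`, then
`E x ∈ I ^ (s + 1)`, so `s x ∈ I ^ (s + 1)`, and `s` is invertible. When `R` is formally étale over
a polynomial ring, the `dXᵢ` form a basis of `Ω[R⁄k]`, and the condition on `dx` becomes one on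
partial derivatives.
-/

open KaehlerDifferential MvPolynomial
open scoped TensorProduct

theorem mem_ideal_smul_top_iff_basis_repr_mem {R M ι : Type*} [CommRing R] [AddCommGroup M]
    [Module R M] (b : Module.Basis ι R M) (J : Ideal R) (x : M) :
    x ∈ J • (⊤ : Submodule R M) ↔ ∀ i, b.repr x i ∈ J := by
  rw [← b.span_eq, Submodule.mem_ideal_smul_span_iff_exists_sum]
  constructor
  · rintro ⟨a, ha, rfl⟩ i
    rw [← Finsupp.linearCombination_apply, b.repr_linearCombination]
    exact ha i
  · exact fun h => ⟨b.repr x, h, b.linearCombination_repr x⟩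

section Derivation

variable {k R M : Type*} [CommRing k] [CommRing R] [Algebra k R] [AddCommGroup M] [Module R M]
  [Module k M]

theorem derivation_mem_pow_smul_top (δ : Derivation k R M) (I : Ideal R) {n : ℕ} {x : R}
    (hx : x ∈ I ^ (n + 1)) : δ x ∈ I ^ n • (⊤ : Submodule R M) := by
  induction n generalizing x with
  | zero => simp
  | succ n ih =>
    rw [pow_succ] at hx
    refine Submodule.mul_induction_on hx (fun a ha b hb => ?_) (fun a b ha hb => ?_)
    · rw [δ.leibniz]
      refine add_mem (Submodule.smul_mem_smul ha trivial) ?_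
      rw [pow_succ', mul_smul]
      exact Submodule.smul_mem_smul hb (ih ha)
    · rw [map_add]
      exact add_mem ha hb

variable [IsScalarTower k R M]

theorem derivation_mem_smul_top_of_D_mem (δ : Derivation k R M) {J : Ideal R} {x : R}
    (hx : D k R x ∈ J • (⊤ : Submodule R Ω[R⁄k])) : δ x ∈ J • (⊤ : Submodule R M) := by
  rw [← δ.liftKaehlerDifferential_comp_D]
  exact Submodule.smul_top_le_comap_smul_top J _ hx

theorem exists_compDer_eq_of_surjective [Module.Projective R Ω[R⁄k]] {N : Type*} [AddCommGroup N]
    [Module R N] [Module k N] [IsScalarTower k R N] {g : N →ₗ[R] M} (hg : Function.Surjective g)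
    (δ : Derivation k R M) : ∃ E : Derivation k R N, g.compDer E = δ := by
  obtain ⟨L, hL⟩ := Module.projective_lifting_property g δ.liftKaehlerDifferential hg
  refine ⟨L.compDer (D k R), ?_⟩
  ext x
  simpa using LinearMap.congr_fun hL (D k R x)

end Derivation

section Euler

variable {k R : Type*} [CommRing k] [CommRing R] [Algebra k R] {I : Ideal R}

/-- An `I`-valued derivation of `R` is *Euler* if it induces the identity on `I/I²`, as the Euler
vector field `∑ Xᵢ ∂/∂Xᵢ` does for the ideal generated by the variables of a polynomial ring. -/
def IsEulerDerivation (E : Derivation k R I) : Prop :=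
  ∀ x : I, I.toCotangent (E x) = I.toCotangent x

theorem IsEulerDerivation.sub_natCast_mul_mem_pow {E : Derivation k R I}
    (hE : IsEulerDerivation E) {n : ℕ} {x : R} (hx : x ∈ I ^ n) :
    (E x : R) - n * x ∈ I ^ (n + 1) := by
  induction n generalizing x with
  | zero => simp
  | succ n ih =>
    rw [pow_succ] at hx
    refine Submodule.mul_induction_on hx (fun a ha b hb => ?_) (fun a b ha hb => ?_)
    · have hb' : (E b : R) - b ∈ I ^ 2 := I.toCotangent_eq.1 (hE ⟨b, hb⟩)
      have h₁ : a * ((E b : R) - b) ∈ I ^ (n + 2) := pow_add I n 2 ▸ Ideal.mul_mem_mul ha hb'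
      have h₂ : ((E a : R) - n * a) * b ∈ I ^ (n + 2) :=
        pow_succ I (n + 1) ▸ Ideal.mul_mem_mul (ih ha) hb
      convert add_mem h₁ h₂ using 1
      simp only [Derivation.leibniz, Submodule.coe_add, Submodule.coe_smul, smul_eq_mul]
      push_cast
      ring
    · convert add_mem ha hb using 1
      simp only [map_add, Submodule.coe_add]
      ring

variable (k I) [Algebra.FormallySmooth k R] [Algebra.FormallySmooth k (R ⧸ I)]

theorem exists_derivation_eq_toCotangent :
    ∃ δ : Derivation k R I.Cotangent, ∀ x : I, δ x = I.toCotangent x := by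
  obtain ⟨l, hl⟩ := (Algebra.FormallySmooth.iff_split_injection (R := k) (P := R) (A := R ⧸ I)
    Ideal.Quotient.mk_surjective).1 inferInstance
  have hker : RingHom.ker (algebraMap R (R ⧸ I)) = I := Ideal.mk_ker
  let ρ : (R ⧸ I) ⊗[R] Ω[R⁄k] →ₗ[R] I.Cotangent :=
    Ideal.mapCotangent _ I (AlgHom.id R R) hker.le ∘ₗ l
  refine ⟨(ρ ∘ₗ TensorProduct.mk R (R ⧸ I) _ 1).compDer (D k R), fun x => ?_⟩
  let x' : RingHom.ker (algebraMap R (R ⧸ I)) := ⟨x, hker.ge x.2⟩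
  have hlx : l (1 ⊗ₜ D k R (x : R)) = Ideal.toCotangent _ x' :=
    LinearMap.congr_fun hl (Ideal.toCotangent _ x')
  calc ρ (1 ⊗ₜ D k R (x : R))
    _ = Ideal.mapCotangent _ I (AlgHom.id R R) hker.le (Ideal.toCotangent _ x') := by
      rw [← hlx, LinearMap.comp_apply]
    _ = I.toCotangent x := Ideal.mapCotangent_toCotangent _ _ _ _ _

theorem exists_isEulerDerivation : ∃ E : Derivation k R I, IsEulerDerivation E := by
  obtain ⟨δ, hδ⟩ := exists_derivation_eq_toCotangent k I
  obtain ⟨E, rfl⟩ := exists_compDer_eq_of_surjective I.toCotangent_surjective δ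
  exact ⟨E, hδ⟩

theorem mem_pow_succ_iff_mem_pow_and_D_mem {s : ℕ} (hs : IsUnit (s : R)) (x : R) :
    x ∈ I ^ (s + 1) ↔ x ∈ I ^ s ∧ D k R x ∈ I ^ s • (⊤ : Submodule R Ω[R⁄k]) := by
  refine ⟨fun hx => ⟨Ideal.pow_le_pow_right s.le_succ hx, derivation_mem_pow_smul_top _ I hx⟩,
    fun ⟨hx, hdx⟩ => ?_⟩
  obtain ⟨E, hE⟩ := exists_isEulerDerivation k I
  have hEx : (E x : R) ∈ I ^ (s + 1) := by
    rw [pow_succ, ← smul_eq_mul, ← Submodule.mem_smul_top_iff]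
    exact derivation_mem_smul_top_of_D_mem E hdx
  have hsx : (s : R) * x ∈ I ^ (s + 1) := by
    simpa only [sub_sub_cancel] using sub_mem hEx (hE.sub_natCast_mul_mem_pow hx)
  exact (Ideal.unit_mul_mem_iff_mem _ hs).1 hsx

end Euler

section EtaleCoordinates

variable {k σ R : Type*} [CommRing k] [CommRing R] [Algebra k R] [Algebra (MvPolynomial σ k) R]
  [IsScalarTower k (MvPolynomial σ k) R] [Algebra.FormallyEtale (MvPolynomial σ k) R]

theorem D_algebraMap_mem_smul_top_iff_pderiv_mem (J : Ideal R) (f : MvPolynomial σ k) :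
    D k R (algebraMap _ R f) ∈ J • (⊤ : Submodule R Ω[R⁄k]) ↔
      ∀ i, algebraMap _ R (pderiv i f) ∈ J := by
  let dX : Module.Basis σ R Ω[R⁄k] := ((mvPolynomialBasis k σ).baseChange R).map
    (tensorKaehlerEquivOfFormallyEtale k (MvPolynomial σ k) R)
  have repr_dX (i : σ) : dX.repr (D k R (algebraMap _ R f)) i = algebraMap _ R (pderiv i f) := by
    simp only [dX, Module.Basis.map_repr, LinearEquiv.trans_apply,
      tensorKaehlerEquivOfFormallyEtale_symm_D_algebraMap, Module.Basis.baseChange_repr_tmul,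
      mvPolynomialBasis_repr_apply, Algebra.smul_def, mul_one]
  simp only [mem_ideal_smul_top_iff_basis_repr_mem dX, repr_dX]

theorem mem_pow_succ_iff_mem_pow_and_pderiv_general (I : Ideal R)
    [Algebra.FormallySmooth k (R ⧸ I)] {s : ℕ} (hs : IsUnit (s : R)) (f : MvPolynomial σ k) :
    algebraMap _ R f ∈ I ^ (s + 1) ↔
      algebraMap _ R f ∈ I ^ s ∧ ∀ i, algebraMap _ R (pderiv i f) ∈ I ^ s := by
  have : Algebra.FormallySmooth k R := .comp k (MvPolynomial σ k) R
  rw [mem_pow_succ_iff_mem_pow_and_D_mem k I hs, D_algebraMap_mem_smul_top_iff_pderiv_mem]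

end EtaleCoordinates

theorem formallySmooth_localization_quotient_of_isFractionRing (k : Type*) {A : Type*}
    [CommRing k] [CommRing A] [Algebra k A] (p : Ideal A) [p.IsPrime] (κ : Type*) [CommRing κ]
    [Algebra (A ⧸ p) κ] [IsFractionRing (A ⧸ p) κ] [Algebra k κ] [IsScalarTower k (A ⧸ p) κ]
    [Algebra.FormallySmooth k κ] :
    Algebra.FormallySmooth k
      (Localization.AtPrime p ⧸ p.map (algebraMap A (Localization.AtPrime p))) := by
  have : Algebra.FormallySmooth k p.ResidueField :=
    .of_equiv ((IsLocalization.algEquiv (nonZeroDivisors (A ⧸ p)) κ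
      p.ResidueField).restrictScalars k)
  rw [Localization.AtPrime.map_eq_maximalIdeal]
  exact this

theorem isUnit_natCast_of_lt_ringChar (k R : Type*) [Field k] [CommRing R] [Algebra k R] {s : ℕ}
    (hs : s ≠ 0) (h : ringChar k = 0 ∨ s < ringChar k) : IsUnit (s : R) := by
  have hsk : (s : k) ≠ 0 := by
    rw [Ne, ringChar.spec]
    rcases h with h₀ | hlt
    · rwa [h₀, zero_dvd_iff]
    · exact Nat.not_dvd_of_pos_of_lt hs.pos hlt
  simpa only [map_natCast] using hsk.isUnit.map (algebraMap k R)

/-- Let `A = k[x₁,…,xₙ]`, `𝔭` a prime of `A` with separably generated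
(= formally smooth) residue field `k(𝔭)`, `s ≥ 1`, and `char k = 0` or `char k > s`.  Then for
every `f ∈ A`: `f ∈ 𝔭^{s+1} A_𝔭` iff `f ∈ 𝔭^s A_𝔭` and `∂f/∂xᵢ ∈ 𝔭^s A_𝔭` for all `i`.
(This computes the kernel of the Taylor morphism of order `s` at `𝔭`.) -/
theorem mem_pow_succ_iff_mem_pow_and_pderiv
    (k : Type u) [Field k] (n : ℕ)
    (p : Ideal (MvPolynomial (Fin n) k)) [p.IsPrime]
    (s : ℕ) (hs : 1 ≤ s)
    (κ : Type u) [Field κ] [Algebra (MvPolynomial (Fin n) k ⧸ p) κ]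
    [IsFractionRing (MvPolynomial (Fin n) k ⧸ p) κ]
    [Algebra k κ] [IsScalarTower k (MvPolynomial (Fin n) k ⧸ p) κ]
    (hfs : Algebra.FormallySmooth k κ)
    (hchar : ringChar k = 0 ∨ s < ringChar k) :
    ∀ f : MvPolynomial (Fin n) k,
      algebraMap (MvPolynomial (Fin n) k) (Localization.AtPrime p) f ∈
          (p.map (algebraMap (MvPolynomial (Fin n) k) (Localization.AtPrime p))) ^ (s + 1) ↔
        (algebraMap (MvPolynomial (Fin n) k) (Localization.AtPrime p) f ∈
            (p.map (algebraMap (MvPolynomial (Fin n) k) (Localization.AtPrime p))) ^ s ∧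
          ∀ i : Fin n,
            algebraMap (MvPolynomial (Fin n) k) (Localization.AtPrime p)
                (MvPolynomial.pderiv i f) ∈
              (p.map (algebraMap (MvPolynomial (Fin n) k) (Localization.AtPrime p))) ^ s) := by
  have := formallySmooth_localization_quotient_of_isFractionRing k p κ
  exact mem_pow_succ_iff_mem_pow_and_pderiv_general _
    (isUnit_natCast_of_lt_ringChar k _ (Nat.one_le_iff_ne_zero.1 hs) hchar)
end

section
/- Let k be a field, B a k-algebra of finite type, 𝔭 a prime ideal of B, and s ∈ ℕ with s ≥ 1. Assume the residue field k(𝔭) is formally smooth over k (equivalently, separably generated over k), and that char(k) is either 0 or greater than s. Then there exists a ∈ B with a ∉ 𝔭 such that, in the localization B_a, the ideal 𝔭^s B_a equals the intersection of the ideals 𝔪^s B_a over all maximal ideals 𝔪 of B containing 𝔭 whose residue field k(𝔪) is separable over k. -/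
/-!
Generically `V(𝔭)` is smooth, so over a dense open subset the infinitesimal thickening
`C = B ⧸ 𝔭 ^ s` of `A = B ⧸ 𝔭` retracts onto `A`: it is an `A`-algebra with an augmentation
`π : C → A` such that `(ker π) ^ s = 0`. The maximal ideal `𝔪` of `C` over a maximal ideal `𝔫` of
`A` is `𝔫 C + ker π`, hence `𝔪 ^ s ⊆ 𝔫 C`.

Now `C` is a finite `A`-module, so it becomes free after inverting some nonzero element of `A`.
In a free module the intersection of the submodules `𝔫 C` vanishes as soon as the intersection of
the `𝔫` does. For `𝔫` running over the maximal ideals with separable residue field this is the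
density of separable closed points on a smooth variety. Over an infinite field that follows by
pulling back rational points along étale coordinates; over a perfect field every closed point is
separable.
-/

universe u

/-- The closed points of `Spec A` whose residue field is a separable algebraic extension of `k`. -/
def separablePoints (k A : Type*) [Field k] [CommRing A] [Algebra k A] : Set (Ideal A) :=
  {m | m.IsMaximal ∧ Algebra.IsSeparable k (A ⧸ m)}

section SeparablePoints

variable {k A C : Type*} [Field k] [CommRing A] [CommRing C] [Algebra k A] [Algebra k C]

lemma comap_mem_separablePoints (f : A →ₐ[k] C) {n : Ideal C} (hn : n ∈ separablePoints k C) :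
    n.comap f ∈ separablePoints k A := by
  obtain ⟨hmax, hsep⟩ := hn
  let g : (A ⧸ n.comap f) →ₐ[k] (C ⧸ n) := Ideal.quotientMapₐ n f le_rfl
  have hg : Function.Injective g := Ideal.quotientMap_injective
  have hsep' : Algebra.IsSeparable k (A ⧸ n.comap f) := ⟨fun x ↦ by
    rw [IsSeparable, ← minpoly.algHom_eq g hg]
    exact Algebra.IsSeparable.isSeparable k (g x)⟩
  exact ⟨Ideal.Quotient.maximal_of_isField _
    (isField_of_isIntegral_of_isField' (Field.toIsField k)), hsep'⟩

lemma separablePoints_nonempty_of_perfectField (k A : Type*) [Field k] [PerfectField k]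
    [CommRing A] [Nontrivial A] [Algebra k A] [Algebra.FiniteType k A] :
    (separablePoints k A).Nonempty := by
  obtain ⟨m, hm⟩ := Ideal.exists_maximal A
  let := Ideal.Quotient.field m
  have : Module.Finite k (A ⧸ m) := finite_of_finite_type_of_isJacobsonRing k (A ⧸ m)
  exact ⟨m, hm, inferInstance⟩

lemma exists_ker_aeval_mem_of_isOpen {σ : Type*} [Infinite k]
    {U : Set (PrimeSpectrum (MvPolynomial σ k))} (hU : IsOpen U) (hne : U.Nonempty) :
    ∃ c : σ → k, ⟨RingHom.ker (MvPolynomial.aeval (R := k) c), RingHom.ker_isPrime _⟩ ∈ U := by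
  obtain ⟨x, hx⟩ := hne
  obtain ⟨_, ⟨_, ⟨h, rfl⟩, rfl⟩, hxh, hhU⟩ :=
    PrimeSpectrum.isBasis_basic_opens.exists_subset_of_mem_open hx hU
  have hh : h ≠ 0 := by
    rintro rfl
    simp at hxh
  obtain ⟨c, hc⟩ : ∃ c : σ → k, MvPolynomial.eval c h ≠ 0 := by
    contrapose! hh
    exact MvPolynomial.funext fun c ↦ by simpa using hh c
  refine ⟨c, hhU ?_⟩
  simpa [MvPolynomial.aeval_eq_eval] using hc

lemma isSeparable_quotient_of_ker_le_comap {R T : Type*} [CommRing R] [CommRing T] [Algebra k R]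
    [Algebra k T] [Algebra R T] [IsScalarTower k R T] [Algebra.FormallyUnramified R T]
    [Algebra.FiniteType k T] (e : R →ₐ[k] k) (n : Ideal T) [n.IsMaximal]
    (hn : RingHom.ker e ≤ n.comap (algebraMap R T)) : Algebra.IsSeparable k (T ⧸ n) := by
  let := Ideal.Quotient.field n
  let : Algebra R k := e.toAlgebra
  -- `R → T ⧸ n` factors through the rational point `e`.
  have : IsScalarTower R k (T ⧸ n) := by
    refine IsScalarTower.of_algebraMap_eq fun r ↦ ?_
    have hr : r - algebraMap k R (e r) ∈ RingHom.ker e := by simp [RingHom.mem_ker]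
    have := Ideal.Quotient.eq_zero_iff_mem.mpr (Ideal.mem_comap.mp (hn hr))
    rwa [map_sub, map_sub, sub_eq_zero, ← IsScalarTower.algebraMap_apply k R T] at this
  have : Algebra.FormallyUnramified k (T ⧸ n) := .of_restrictScalars R k _
  exact Algebra.FormallyUnramified.isSeparable k _

lemma separablePoints_nonempty_of_etale_mvPolynomial {σ T : Type*} [Infinite k] [Finite σ]
    [CommRing T] [Nontrivial T] [Algebra k T] [Algebra (MvPolynomial σ k) T]
    [IsScalarTower k (MvPolynomial σ k) T] [Algebra.Etale (MvPolynomial σ k) T] :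
    (separablePoints k T).Nonempty := by
  have hopen : IsOpen (Set.range (PrimeSpectrum.comap (algebraMap (MvPolynomial σ k) T))) :=
    PrimeSpectrum.isOpenMap_comap_of_hasGoingDown_of_finitePresentation.isOpen_range
  obtain ⟨c, P, hP⟩ := exists_ker_aeval_mem_of_isOpen hopen (Set.range_nonempty _)
  obtain ⟨n, hn, hPn⟩ := Ideal.exists_le_maximal P.asIdeal P.2.ne_top
  have : Algebra.FiniteType k T := .trans (S := MvPolynomial σ k) inferInstance inferInstance
  refine ⟨n, hn, isSeparable_quotient_of_ker_le_comap (MvPolynomial.aeval c) n ?_⟩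
  exact (congr_arg (·.asIdeal) hP).symm.le.trans (Ideal.comap_mono hPn)

lemma nontrivial_localizationAway {f : A} (hf : ¬ IsNilpotent f) :
    Nontrivial (Localization.Away f) := by
  refine not_subsingleton_iff_nontrivial.mp fun h ↦ hf ?_
  exact (IsLocalization.subsingleton_iff (S := Localization.Away f) (M := .powers f)).mp h

lemma separablePoints_nonempty_of_smooth (k A : Type*) [Field k] [CommRing A] [Nontrivial A]
    [Algebra k A] [Algebra.Smooth k A] : (separablePoints k A).Nonempty := by
  cases finite_or_infinite k with
  | inl _ => exact separablePoints_nonempty_of_perfectField k A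
  | inr _ =>
    obtain ⟨⟨p, hp⟩⟩ : Nonempty (PrimeSpectrum A) := inferInstance
    obtain ⟨f, hf, N, _, _, _⟩ :=
      Algebra.IsSmoothAt.exists_isStandardEtale_mvPolynomial (R := k) (p := p)
    have : Nontrivial (Localization.Away f) :=
      nontrivial_localizationAway fun ⟨j, hj⟩ ↦ hf (hp.mem_of_pow_mem j (hj ▸ p.zero_mem))
    obtain ⟨n, hn⟩ := separablePoints_nonempty_of_etale_mvPolynomial (k := k) (σ := Fin N)
      (T := Localization.Away f)
    exact ⟨_, comap_mem_separablePoints (IsScalarTower.toAlgHom k A _) hn⟩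

lemma sInf_separablePoints_of_smooth (k A : Type*) [Field k] [CommRing A] [Algebra k A]
    [Algebra.Smooth k A] : sInf (separablePoints k A) = nilradical A := by
  refine le_antisymm (fun g hg ↦ ?_) (le_sInf fun m hm ↦ nilradical_le_prime m (H := hm.1.isPrime))
  by_contra hnil
  have := nontrivial_localizationAway hnil
  have : Algebra.Smooth k (Localization.Away g) := .comp k A _
  obtain ⟨n, hn⟩ := separablePoints_nonempty_of_smooth k (Localization.Away g)
  have hgn := Ideal.mem_sInf.mp hg
    (comap_mem_separablePoints (IsScalarTower.toAlgHom k A (Localization.Away g)) hn)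
  exact hn.1.ne_top (Ideal.eq_top_of_isUnit_mem _ hgn (IsLocalization.Away.algebraMap_isUnit g))

end SeparablePoints

section GenericFreeness

variable {A M : Type*} [CommRing A] [AddCommGroup M] [Module A M]

lemma eq_zero_of_forall_mem_map_away {Aᵣ : Type*} [CommRing Aᵣ] [Algebra A Aᵣ] (r : A)
    [IsLocalization.Away r Aᵣ] {P : Set (Ideal A)} (hP : ∀ n ∈ P, n.IsPrime) (hP₀ : sInf P = ⊥)
    {y : Aᵣ} (hy : ∀ n ∈ P, r ∉ n → y ∈ n.map (algebraMap A Aᵣ)) : y = 0 := by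
  obtain ⟨a, t, rfl⟩ := IsLocalization.exists_mk'_eq (Submonoid.powers r) y
  have hra : r * a ∈ sInf P := by
    refine Ideal.mem_sInf.mpr fun {n} hn ↦ ?_
    by_cases hrn : r ∈ n
    · exact n.mul_mem_right a hrn
    obtain ⟨_, ⟨j, rfl⟩, hj⟩ :=
      (IsLocalization.mk'_mem_map_algebraMap_iff (.powers r) Aᵣ n a t).mp (hy n hn hrn)
    have := hP n hn
    exact n.mul_mem_left r ((this.mem_or_mem hj).resolve_left fun h ↦ hrn (this.mem_of_pow_mem j h))
  rw [hP₀, Ideal.mem_bot] at hra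
  exact IsLocalization.mk'_eq_zero_iff .. |>.mpr ⟨⟨r, Submonoid.mem_powers r⟩, hra⟩

lemma exists_pow_smul_eq_zero_of_free_away (r : A)
    [Module.Free (Localization.Away r) (LocalizedModule.Away r M)] {P : Set (Ideal A)}
    (hP : ∀ n ∈ P, n.IsPrime) (hP₀ : sInf P = ⊥) {x : M}
    (hx : ∀ n ∈ P, r ∉ n → x ∈ n • (⊤ : Submodule A M)) : ∃ N : ℕ, r ^ N • x = 0 := by
  let b := Module.Free.chooseBasis (Localization.Away r) (LocalizedModule.Away r M)
  let ι := LocalizedModule.mkLinearMap (Submonoid.powers r) M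
  have hι : ι x = 0 := by
    refine b.ext_elem fun i ↦ ?_
    rw [map_zero, Finsupp.zero_apply]
    let φ : M →ₗ[A] Localization.Away r := (b.coord i).restrictScalars A ∘ₗ ι
    refine eq_zero_of_forall_mem_map_away r hP hP₀ (y := φ x) fun n hn hrn ↦ ?_
    have := Submodule.smul_top_le_comap_smul_top n φ (hx n hn hrn)
    rwa [Submodule.mem_comap, Ideal.smul_top_eq_map] at this
  obtain ⟨⟨_, N, rfl⟩, hN⟩ := (IsLocalizedModule.eq_zero_iff (Submonoid.powers r) ι).mp hι
  exact ⟨N, hN⟩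

lemma exists_ne_zero_free_away (A M : Type*) [CommRing A] [IsDomain A] [AddCommGroup M] [Module A M]
    [Module.FinitePresentation A M] :
    ∃ r : A, r ≠ 0 ∧ Module.Free (Localization.Away r) (LocalizedModule.Away r M) := by
  obtain ⟨r, hr, hfree, -⟩ := Module.FinitePresentation.exists_free_localizedModule_powers
    (nonZeroDivisors A) (LocalizedModule.mkLinearMap (nonZeroDivisors A) M) (FractionRing A)
  exact ⟨r, nonZeroDivisors.ne_zero hr, hfree⟩

end GenericFreeness

section Augmentation

variable {A C : Type*} [CommRing A] [CommRing C] [Algebra A C] (π : C →ₐ[A] A)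

lemma sub_algebraMap_mem_ker (c : C) : c - algebraMap A C (π c) ∈ RingHom.ker π := by
  simp [RingHom.mem_ker]

lemma isIntegral_of_isNilpotent_ker (hπ : IsNilpotent (RingHom.ker π)) :
    Algebra.IsIntegral A C := by
  obtain ⟨s, hs⟩ := hπ
  refine ⟨fun c ↦ ?_⟩
  have hnil : (c - algebraMap A C (π c)) ^ s = 0 := by
    simpa [hs] using Ideal.pow_mem_pow (sub_algebraMap_mem_ker π c) s
  have hint : IsIntegral A (c - algebraMap A C (π c)) :=
    ⟨Polynomial.X ^ s, Polynomial.monic_X_pow s, by simpa using hnil⟩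
  simpa using hint.add (isIntegral_algebraMap (x := π c))

lemma comap_le_map_sup_ker (n : Ideal A) :
    n.comap π ≤ n.map (algebraMap A C) ⊔ RingHom.ker π := fun c hc ↦ by
  rw [← add_sub_cancel (algebraMap A C (π c)) c]
  exact Submodule.add_mem_sup (Ideal.mem_map_of_mem _ hc) (sub_algebraMap_mem_ker π c)

lemma sup_pow_le_sup_pow {R : Type*} [CommSemiring R] (I J : Ideal R) (s : ℕ) :
    (I ⊔ J) ^ s ≤ I ⊔ J ^ s := by
  induction s with
  | zero => simp
  | succ s ih =>
    calc (I ⊔ J) ^ (s + 1) ≤ (I ⊔ J ^ s) * (I ⊔ J) := Ideal.mul_mono_left ih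
      _ = I * (I ⊔ J) ⊔ (J ^ s * I ⊔ J ^ s * J) := by rw [Ideal.sup_mul, Ideal.mul_sup (J ^ s)]
      _ ≤ I ⊔ J ^ (s + 1) :=
        sup_le (le_sup_of_le_left Ideal.mul_le_left) (sup_le_sup Ideal.mul_le_right le_rfl)

lemma comap_pow_le_map {s : ℕ} (hπ : RingHom.ker π ^ s = ⊥) (n : Ideal A) :
    n.comap π ^ s ≤ n.map (algebraMap A C) :=
  calc n.comap π ^ s ≤ (n.map (algebraMap A C) ⊔ RingHom.ker π) ^ s :=
        Ideal.pow_right_mono (comap_le_map_sup_ker π n) s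
    _ ≤ n.map (algebraMap A C) ⊔ RingHom.ker π ^ s := sup_pow_le_sup_pow _ _ s
    _ = n.map (algebraMap A C) := by rw [hπ, sup_bot_eq]

end Augmentation

/-- Where `d` is invertible, membership in `q ^ s` can be tested at the closed points of `V(q)` with
separable residue field. The conclusion `∃ N, d ^ N * x ∈ q ^ s` expresses `x ∈ q ^ s B_d` inside
`B`, which spares comparing iterated localizations. -/
def PowDetectedAway (k : Type*) {B : Type*} [Field k] [CommRing B] [Algebra k B] (q : Ideal B)
    (s : ℕ) (d : B) : Prop :=
  ∀ x, (∀ m ∈ separablePoints k B, q ≤ m → d ∉ m → x ∈ m ^ s) → ∃ N : ℕ, d ^ N * x ∈ q ^ s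

section PowDetectedAway

variable {k A B C : Type*} [Field k] [CommRing A] [CommRing B] [CommRing C] [Algebra k A]
  [Algebra k B] [Algebra k C]

lemma exists_powDetectedAway_of_augmentation [IsDomain A] [Algebra.Smooth k A]
    [Algebra.FiniteType k C] [Algebra A C] [IsScalarTower k A C] (π : C →ₐ[A] A) {s : ℕ}
    (hπ : RingHom.ker π ^ s = ⊥) : ∃ d ∉ RingHom.ker π, PowDetectedAway k (RingHom.ker π) s d := by
  have : Algebra.FiniteType A C := .of_restrictScalars_finiteType k A C
  have : Algebra.IsIntegral A C := isIntegral_of_isNilpotent_ker π ⟨s, hπ⟩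
  have : Module.Finite A C := Algebra.IsIntegral.finite
  have : IsNoetherianRing A := Algebra.FiniteType.isNoetherianRing k A
  have : Module.FinitePresentation A C := Module.finitePresentation_of_finite A C
  obtain ⟨r, hr, _⟩ := exists_ne_zero_free_away A C
  refine ⟨algebraMap A C r, by simpa [RingHom.mem_ker] using hr, fun x hx ↦ ?_⟩
  have hsInf : sInf (separablePoints k A) = ⊥ :=
    (sInf_separablePoints_of_smooth k A).trans (nilradical_eq_zero A)
  obtain ⟨N, hN⟩ := exists_pow_smul_eq_zero_of_free_away (M := C) r (fun n hn ↦ hn.1.isPrime) hsInf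
    (x := x) fun n hn hrn ↦ by
      rw [Ideal.smul_top_eq_map]
      exact comap_pow_le_map π hπ n (hx _ (comap_mem_separablePoints (π.restrictScalars k) hn)
        (Ideal.comap_mono bot_le) (by simpa using hrn))
  refine ⟨N, ?_⟩
  rw [hπ, ← map_pow, ← Algebra.smul_def, hN]
  exact zero_mem _

lemma exists_powDetectedAway_of_surjective [IsDomain A] [Algebra.Smooth k A]
    [Algebra.FiniteType k C] (π : C →ₐ[k] A) (hsurj : Function.Surjective π) {s : ℕ}
    (hπ : RingHom.ker π ^ s = ⊥) : ∃ d ∉ RingHom.ker π, PowDetectedAway k (RingHom.ker π) s d := by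
  let σ : A →ₐ[k] C := Algebra.FormallySmooth.liftOfSurjective (AlgHom.id k A) π hsurj ⟨s, hπ⟩
  have hσ (a : A) : π (σ a) = a :=
    Algebra.FormallySmooth.liftOfSurjective_apply (AlgHom.id k A) π hsurj ⟨s, hπ⟩ a
  let : Algebra A C := σ.toAlgebra
  exact exists_powDetectedAway_of_augmentation { π with commutes' := hσ } hπ

lemma PowDetectedAway.of_associated {q : Ideal B} {s : ℕ} {d d' : B} (h : Associated d d')
    (hd : PowDetectedAway k q s d) : PowDetectedAway k q s d' := fun x hx ↦ by
  obtain ⟨N, hN⟩ := hd x fun m hm hqm hdm ↦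
    hx m hm hqm fun hd'm ↦ hdm ((Ideal.mem_iff_of_associated h).mpr hd'm)
  exact ⟨N, (Ideal.mem_iff_of_associated ((h.pow_pow (n := N)).mul_right x)).mp hN⟩

lemma PowDetectedAway.exists_map_pow_mul_mem (f : B →ₐ[k] C) {q : Ideal C} {s : ℕ} {d : B}
    (hd : PowDetectedAway k q s (f d)) {x : B}
    (hx : ∀ m ∈ separablePoints k B, q.comap f ≤ m → d ∉ m → x ∈ m ^ s) :
    ∃ N : ℕ, f (d ^ N * x) ∈ q ^ s := by
  obtain ⟨N, hN⟩ := hd (f x) fun n hn hqn hdn ↦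
    Ideal.le_comap_pow f s (hx _ (comap_mem_separablePoints f hn) (Ideal.comap_mono hqn) hdn)
  exact ⟨N, by rwa [map_mul, map_pow]⟩

lemma PowDetectedAway.comap_of_surjective {f : B →ₐ[k] C} (hf : Function.Surjective f)
    {q : Ideal C} {s : ℕ} (hker : RingHom.ker f ≤ q.comap f ^ s) {d : B}
    (hd : PowDetectedAway k q s (f d)) : PowDetectedAway k (q.comap f) s d := fun x hx ↦ by
  obtain ⟨N, hN⟩ := hd.exists_map_pow_mul_mem f hx
  rw [← Ideal.map_comap_of_surjective f hf q, ← Ideal.map_pow] at hN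
  obtain ⟨y, hy, hyx⟩ := (Ideal.mem_map_iff_of_surjective f hf).mp hN
  refine ⟨N, ?_⟩
  rw [← sub_add_cancel (d ^ N * x) y]
  exact add_mem (hker (by rw [RingHom.mem_ker, map_sub, hyx, sub_self])) hy

lemma exists_powDetectedAway_of_isLocalization {T : Type*} [CommRing T] [Algebra k T]
    [Algebra B T] [IsScalarTower k B T] {a : B} [IsLocalization.Away a T] {p : Ideal B} [p.IsPrime]
    (ha : a ∉ p) {s : ℕ} {d : T} (hdp : d ∉ p.map (algebraMap B T))
    (hd : PowDetectedAway k (p.map (algebraMap B T)) s d) : ∃ b ∉ p, PowDetectedAway k p s b := by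
  let f := IsScalarTower.toAlgHom k B T
  let d₀ := (IsLocalization.Away.sec a d).1
  have hassoc : Associated (algebraMap B T d₀) d := IsLocalization.Away.associated_sec_fst a d
  have hd₀ : d₀ ∉ p := fun h ↦
    hdp ((Ideal.mem_iff_of_associated hassoc).mp (Ideal.mem_map_of_mem _ h))
  have hassoc' : Associated d (f (a * d₀)) := by
    rw [map_mul]
    exact hassoc.symm.trans
      (associated_unit_mul_right _ _ (IsLocalization.Away.algebraMap_isUnit a))
  have hcomap : (p.map (algebraMap B T)).comap f = p :=
    IsLocalization.under_map_of_isPrime_disjoint (.powers a) T ‹_›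
      ((Ideal.disjoint_powers_iff_notMem_of_isPrime a).mpr ha)
  refine ⟨a * d₀, Ideal.IsPrime.mul_notMem ‹_› ha hd₀, fun x hx ↦ ?_⟩
  obtain ⟨N, hN⟩ := (hd.of_associated hassoc').exists_map_pow_mul_mem f (hcomap.symm ▸ hx)
  rw [← Ideal.map_pow] at hN
  obtain ⟨_, ⟨j, rfl⟩, hj⟩ :=
    (IsLocalization.algebraMap_mem_map_algebraMap_iff (.powers a) T _ _).mp hN
  refine ⟨j + N, ?_⟩
  convert Ideal.mul_mem_left _ (d₀ ^ j) hj using 1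
  ring

lemma exists_powDetectedAway_of_smooth_quotient [Algebra.FiniteType k B] (q : Ideal B) [q.IsPrime]
    [Algebra.Smooth k (B ⧸ q)] (s : ℕ) : ∃ d ∉ q, PowDetectedAway k q s d := by
  rcases eq_or_ne s 0 with rfl | hs
  · exact ⟨1, q.one_notMem, fun x _ ↦ ⟨0, by simp⟩⟩
  let mk := Ideal.Quotient.mkₐ k (q ^ s)
  have hmk : Function.Surjective mk := Ideal.Quotient.mk_surjective
  let π : (B ⧸ q ^ s) →ₐ[k] B ⧸ q := Ideal.Quotient.factorₐ k (Ideal.pow_le_self hs)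
  have hcomap : (RingHom.ker π).comap mk = q := by
    ext x
    exact Ideal.Quotient.eq_zero_iff_mem
  have hπ : RingHom.ker π ^ s = ⊥ := by
    rw [← Ideal.map_comap_of_surjective mk hmk (RingHom.ker π), hcomap, ← Ideal.map_pow]
    exact Ideal.map_quotient_self _
  obtain ⟨d, hd, hdet⟩ := exists_powDetectedAway_of_surjective π
    (Ideal.Quotient.factor_surjective (Ideal.pow_le_self hs)) hπ
  obtain ⟨d, rfl⟩ := hmk d
  rw [← Ideal.mem_comap, hcomap] at hd
  have := hdet.comap_of_surjective hmk (by rw [hcomap]; exact Ideal.mk_ker.le)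
  rw [hcomap] at this
  exact ⟨d, hd, this⟩

lemma PowDetectedAway.map_pow_eq_iInf {Bₐ : Type*} [CommRing Bₐ] [Algebra B Bₐ] {a : B}
    [IsLocalization.Away a Bₐ] {p : Ideal B} {s : ℕ} (ha : PowDetectedAway k p s a) :
    p.map (algebraMap B Bₐ) ^ s =
      ⨅ m ∈ {m : Ideal B | m.IsMaximal ∧ p ≤ m ∧ Algebra.IsSeparable k (B ⧸ m)},
        m.map (algebraMap B Bₐ) ^ s := by
  refine le_antisymm (le_iInf₂ fun m hm ↦ Ideal.pow_right_mono (Ideal.map_mono hm.2.1) s) ?_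
  intro y hy
  simp only [Submodule.mem_iInf, ← Ideal.map_pow] at hy ⊢
  obtain ⟨b, u, rfl⟩ := IsLocalization.exists_mk'_eq (Submonoid.powers a) y
  simp only [IsLocalization.mk'_mem_map_algebraMap_iff] at hy ⊢
  obtain ⟨N, hN⟩ := ha b fun m ⟨hm, hsep⟩ hpm ham ↦ by
    obtain ⟨_, ⟨j, rfl⟩, hj⟩ := hy m ⟨hm, hpm, hsep⟩
    exact (hm.mul_mem_pow _ hj).resolve_left fun h ↦ ham (hm.isPrime.mem_of_pow_mem j h)
  exact ⟨_, ⟨N, rfl⟩, hN⟩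

end PowDetectedAway

section GenericSmoothness

variable (k : Type*) {A B : Type*} [Field k] [CommRing A] [CommRing B] [Algebra k A] [Algebra k B]

lemma exists_ne_zero_smooth_away (K : Type*) [IsDomain A] [Algebra.FiniteType k A] [Field K]
    [Algebra A K] [IsFractionRing A K] [Algebra k K] [IsScalarTower k A K]
    [Algebra.FormallySmooth k K] : ∃ f : A, f ≠ 0 ∧ Algebra.Smooth k (Localization.Away f) := by
  have : IsLocalization (⊥ : Ideal A).primeCompl K := by
    convert ‹IsFractionRing A K›
    ext x
    simp [Ideal.primeCompl]
  have : Algebra.IsSmoothAt k (⊥ : Ideal A) := .of_equiv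
    ((IsLocalization.algEquiv (⊥ : Ideal A).primeCompl K
      (Localization.AtPrime (⊥ : Ideal A))).restrictScalars k)
  have : Algebra.FinitePresentation k A := Algebra.FinitePresentation.of_finiteType.mp ‹_›
  exact Algebra.IsSmoothAt.exists_notMem_smooth k ⊥

lemma smooth_quotient_map_of_smooth_away (p : Ideal B) (a : B) (T : Type*) [CommRing T]
    [Algebra k T] [Algebra B T] [IsScalarTower k B T] [IsLocalization.Away a T]
    [Algebra.Smooth k (Localization.Away (Ideal.Quotient.mk p a))] :
    Algebra.Smooth k (T ⧸ p.map (algebraMap B T)) := by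
  have : IsLocalization.Away (Ideal.Quotient.mk p a) (T ⧸ p.map (algebraMap B T)) := by
    have : IsLocalization (Algebra.algebraMapSubmonoid (B ⧸ p) (.powers a))
      (T ⧸ p.map (algebraMap B T)) := inferInstance
    rwa [Algebra.algebraMapSubmonoid_powers] at this
  have : IsScalarTower k (B ⧸ p) (T ⧸ p.map (algebraMap B T)) := by
    refine .of_algebraMap_eq fun c ↦ ?_
    rw [IsScalarTower.algebraMap_apply k T, IsScalarTower.algebraMap_apply k B T]
    rfl
  exact .of_equiv ((IsLocalization.algEquiv (.powers (Ideal.Quotient.mk p a))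
    (Localization.Away (Ideal.Quotient.mk p a)) (T ⧸ p.map (algebraMap B T))).restrictScalars k)

end GenericSmoothness

theorem pow_eq_iInf_pow_maximal_separable_general
    (k B κ : Type*) [Field k] [CommRing B] [Algebra k B] [Algebra.FiniteType k B]
    (p : Ideal B) [p.IsPrime] (s : ℕ)
    [Field κ] [Algebra (B ⧸ p) κ] [IsFractionRing (B ⧸ p) κ]
    [Algebra k κ] [IsScalarTower k (B ⧸ p) κ] [Algebra.FormallySmooth k κ] :
    ∃ a : B, a ∉ p ∧
      (p.map (algebraMap B (Localization.Away a))) ^ s =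
        ⨅ m ∈ {m : Ideal B | m.IsMaximal ∧ p ≤ m ∧ Algebra.IsSeparable k (B ⧸ m)},
          (m.map (algebraMap B (Localization.Away a))) ^ s := by
  obtain ⟨f, hf, _⟩ := exists_ne_zero_smooth_away k (A := B ⧸ p) κ
  obtain ⟨a₀, rfl⟩ := Ideal.Quotient.mk_surjective f
  have ha₀ : a₀ ∉ p := fun h ↦ hf (Ideal.Quotient.eq_zero_iff_mem.mpr h)
  let T := Localization.Away a₀
  have : Algebra.Smooth k (T ⧸ p.map (algebraMap B T)) :=
    smooth_quotient_map_of_smooth_away k p a₀ T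
  have : (p.map (algebraMap B T)).IsPrime :=
    IsLocalization.isPrime_of_isPrime_disjoint (.powers a₀) T p ‹_›
      ((Ideal.disjoint_powers_iff_notMem_of_isPrime a₀).mpr ha₀)
  obtain ⟨d, hd, hdet⟩ :=
    exists_powDetectedAway_of_smooth_quotient (k := k) (p.map (algebraMap B T)) s
  obtain ⟨a, ha, hdet⟩ := exists_powDetectedAway_of_isLocalization ha₀ hd hdet
  exact ⟨a, ha, hdet.map_pow_eq_iInf⟩

/-- Let `B` be a `k`-algebra of finite type, `𝔭` a prime of `B` with
separably generated (= formally smooth) residue field `k(𝔭)`, `s ≥ 1`, and `char k = 0` or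
`char k > s`.  Then there exists `a ∉ 𝔭` such that in `B_a` the ideal `𝔭^s B_a` is the
intersection of the ideals `𝔪^s B_a` over all maximal `𝔪 ⊇ 𝔭` with `k(𝔪)/k` separable. -/
theorem pow_eq_iInf_pow_maximal_separable
    (k B : Type u) [Field k] [CommRing B] [Algebra k B] [Algebra.FiniteType k B]
    (p : Ideal B) [p.IsPrime] (s : ℕ) (hs : 1 ≤ s)
    (κ : Type u) [Field κ] [Algebra (B ⧸ p) κ] [IsFractionRing (B ⧸ p) κ]
    [Algebra k κ] [IsScalarTower k (B ⧸ p) κ]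
    (hfs : Algebra.FormallySmooth k κ)
    (hchar : ringChar k = 0 ∨ s < ringChar k) :
    ∃ a : B, a ∉ p ∧
      (p.map (algebraMap B (Localization.Away a))) ^ s =
        ⨅ m ∈ {m : Ideal B | m.IsMaximal ∧ p ≤ m ∧ Algebra.IsSeparable k (B ⧸ m)},
          (m.map (algebraMap B (Localization.Away a))) ^ s := by
  exact pow_eq_iInf_pow_maximal_separable_general k B κ p s
end

section
/- Let k be a field, B a k-algebra of finite type, and 𝔭 a prime ideal of B such that the residue field k(𝔭) is formally smooth over k (equivalently, separably generated over k). Then Ω¹_{B/k} ⊗_B k(𝔭) is a free k(𝔭)-vector space of dimension d + t, where d = dim_{k(𝔭)}(𝔭B_𝔭/𝔭²B_𝔭) and t is the transcendence degree of k(𝔭) over k. Equivalently, there is a split short exact sequence of k(𝔭)-vector spaces 0 → 𝔭B_𝔭/𝔭²B_𝔭 → Ω¹_{B/k} ⊗_B k(𝔭) → Ω¹_{k(𝔭)/k} → 0 with dim_{k(𝔭)} Ω¹_{k(𝔭)/k} = t. -/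
universe u

open TensorProduct

/-!
Write `A = B_𝔭`, with maximal ideal `𝔪`, and `κ = k(𝔭)`. Localization is formally étale, so the
fiber is `κ ⊗_A Ω_A`. A section of `A/𝔪² → κ`, which exists because `κ` is formally smooth over `k`,
splits the conormal sequence `𝔪/𝔪² → κ ⊗_A Ω_A → Ω_κ → 0` on the left. So the fiber has
dimension `dim 𝔪/𝔪² + dim Ω_κ`.

To see that `dim Ω_κ` is the transcendence degree of `κ` over `k`, choose elements `xᵢ` of `κ` whose
differentials form a basis of `Ω_κ`. As `Ω_κ` is spanned by the `dxᵢ`, the field `κ` is unramified,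
hence separable algebraic, over `k(xᵢ)`. As the `dxᵢ` are moreover linearly independent and
`H₁(L_{κ/k}) = 0`, the Jacobi–Zariski sequence of `k → k[Xᵢ] → κ` shows that `Xᵢ ↦ xᵢ` is formally
étale. A formally smooth algebra essentially of finite type over a Noetherian ring is flat, so
`k[Xᵢ] → κ` is injective and the `xᵢ` form a transcendence basis.
-/

open Function IsLocalRing KaehlerDifferential

section Flat

variable (R A : Type*) [CommRing R] [CommRing A] [Algebra R A] [Algebra.EssFiniteType R A]

lemma exists_surjective_localization_mvPolynomial :
    ∃ (n : ℕ) (M : Submonoid (MvPolynomial (Fin n) R)) (f : Localization M →ₐ[R] A),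
      Surjective f := by
  obtain ⟨n, g, hg⟩ := Algebra.FiniteType.iff_quotient_mvPolynomial''.mp
    (inferInstance : Algebra.FiniteType R (Algebra.EssFiniteType.subalgebra R A))
  let φ : MvPolynomial (Fin n) R →ₐ[R] A := (Algebra.EssFiniteType.subalgebra R A).val.comp g
  let M : Submonoid (MvPolynomial (Fin n) R) := (IsUnit.submonoid A).comap φ
  have hM (y : M) : IsUnit (φ y) := y.2
  refine ⟨n, M, IsLocalization.liftAlgHom (M := M) (f := φ) hM,
    (IsLocalization.lift_surjective_iff (S := Localization M) (g := φ.toRingHom) hM).mpr fun a ↦ ?_⟩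
  obtain ⟨⟨b, t⟩, hbt⟩ := IsLocalization.surj (Algebra.EssFiniteType.submonoid R A) a
  obtain ⟨b', rfl⟩ := hg b
  obtain ⟨t', ht'⟩ := hg t
  refine ⟨⟨b', t', ?_⟩, ?_⟩
  · change IsUnit (g t' : A)
    rw [ht']
    exact t.2
  · change a * (g t' : A) = g b'
    rw [ht']
    exact hbt

lemma flat_of_formallySmooth_of_essFiniteType [IsNoetherianRing R] [Algebra.FormallySmooth R A] :
    Module.Flat R A := by
  obtain ⟨n, M, f, hf⟩ := exists_surjective_localization_mvPolynomial R A
  have : IsNoetherianRing (Localization M) := IsLocalization.isNoetherianRing M _ inferInstance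
  have : Module.Flat (MvPolynomial (Fin n) R) (Localization M) := IsLocalization.flat _ M
  have : Module.Flat R (Localization M) := .trans R (MvPolynomial (Fin n) R) _
  exact Algebra.FormallySmooth.flat_of_algHom_of_isNoetherianRing f hf

end Flat

lemma formallyEtale_of_bijective_mapBaseChange (R S T : Type*) [CommRing R] [CommRing S]
    [CommRing T] [Algebra R S] [Algebra R T] [Algebra S T] [IsScalarTower R S T]
    [Subsingleton (Algebra.H1Cotangent R T)] (h : Bijective (mapBaseChange R S T)) :
    Algebra.FormallyEtale S T where
  subsingleton_kaehlerDifferential := by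
    refine subsingleton_of_forall_eq 0 fun y ↦ ?_
    obtain ⟨w, rfl⟩ := KaehlerDifferential.map_surjective R S T y
    exact (exact_mapBaseChange_map R S T w).mpr (h.surjective w)
  subsingleton_h1Cotangent := by
    refine subsingleton_of_forall_eq 0 fun y ↦ ?_
    have hδ : Algebra.H1Cotangent.δ R S T y = 0 := h.injective <|
      ((Algebra.H1Cotangent.exact_δ_mapBaseChange R S T).apply_apply_eq_zero y).trans
        (map_zero _).symm
    obtain ⟨w, rfl⟩ := (Algebra.H1Cotangent.exact_map_δ R S T y).mp hδ
    rw [Subsingleton.elim w 0, map_zero]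

section BasisOfDifferentials

variable {R A ι : Type*} [CommRing R] [CommRing A] [Algebra R A] {x : ι → A}

lemma formallyEtale_aeval_of_basis_D [Subsingleton (Algebra.H1Cotangent R A)]
    (b : Module.Basis ι A Ω[A⁄R]) (hb : ∀ i, b i = D R A (x i)) :
    (MvPolynomial.aeval x : MvPolynomial ι R →ₐ[R] A).toRingHom.FormallyEtale := by
  let φ : MvPolynomial ι R →ₐ[R] A := MvPolynomial.aeval x
  change φ.toRingHom.FormallyEtale
  algebraize [φ.toRingHom]
  have : IsScalarTower R (MvPolynomial ι R) A := .of_algebraMap_eq' φ.comp_algebraMap.symm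
  have hX (i : ι) : algebraMap (MvPolynomial ι R) A (.X i) = x i := MvPolynomial.aeval_X x i
  let b' := (mvPolynomialBasis R ι).baseChange A
  have heq : mapBaseChange R (MvPolynomial ι R) A = (b'.equiv b (.refl ι)).toLinearMap :=
    b'.ext fun i ↦ by
      rw [LinearEquiv.coe_coe, Module.Basis.equiv_apply]
      simp [b', hb, hX]
  refine formallyEtale_of_bijective_mapBaseChange R (MvPolynomial ι R) A ?_
  rw [heq]
  exact (b'.equiv b (.refl ι)).bijective

lemma algebraicIndependent_of_basis_D [IsDomain R] [IsNoetherianRing R] [Nontrivial A] [Finite ι]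
    [Algebra.EssFiniteType R A] [Subsingleton (Algebra.H1Cotangent R A)]
    (b : Module.Basis ι A Ω[A⁄R]) (hb : ∀ i, b i = D R A (x i)) : AlgebraicIndependent R x := by
  let φ : MvPolynomial ι R →ₐ[R] A := MvPolynomial.aeval x
  algebraize [φ.toRingHom]
  have : IsScalarTower R (MvPolynomial ι R) A := .of_algebraMap_eq' φ.comp_algebraMap.symm
  have : Algebra.FormallyEtale (MvPolynomial ι R) A := formallyEtale_aeval_of_basis_D b hb
  have : Algebra.EssFiniteType (MvPolynomial ι R) A := .of_comp R _ A
  have : Module.Flat (MvPolynomial ι R) A := flat_of_formallySmooth_of_essFiniteType _ _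
  exact FaithfulSMul.algebraMap_injective (MvPolynomial ι R) A

end BasisOfDifferentials

lemma exists_basis_D (R : Type*) (K : Type u) [CommRing R] [Field K] [Algebra R K] :
    ∃ (ι : Type u) (x : ι → K) (b : Module.Basis ι K Ω[K⁄R]), ∀ i, b i = D R K (x i) := by
  let b := Module.Basis.ofSpan (span_range_derivation R K).ge
  have hb i : b i ∈ Set.range (D R K) := Module.Basis.ofSpan_subset _ (Set.mem_range_self i)
  choose x hx using hb
  exact ⟨_, x, b, fun i ↦ (hx i).symm⟩

section FieldExtension

variable {k K : Type*} [Field k] [Field K] [Algebra k K] [Algebra.EssFiniteType k K]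

lemma isSeparable_adjoin_of_span_D_eq_top {s : Set K}
    (hs : Submodule.span K (D k K '' s) = ⊤) :
    Algebra.IsSeparable (IntermediateField.adjoin k s) K := by
  let E := IntermediateField.adjoin k s
  have hD : Submodule.span K (D k K '' s) ≤ LinearMap.ker (KaehlerDifferential.map k E K K) := by
    rw [Submodule.span_le]
    rintro _ ⟨x, hx, rfl⟩
    have hxE : D E K x = 0 :=
      (D E K).map_algebraMap (⟨x, IntermediateField.subset_adjoin k s hx⟩ : E)
    simpa using hxE
  have : Algebra.FormallyUnramified E K := ⟨subsingleton_of_forall_eq 0 fun y ↦ by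
    obtain ⟨w, rfl⟩ := KaehlerDifferential.map_surjective k E K y
    exact hD (hs ▸ Submodule.mem_top)⟩
  have : Algebra.EssFiniteType E K := .of_comp k E K
  exact Algebra.FormallyUnramified.isSeparable E K

lemma isTranscendenceBasis_of_basis_D [Subsingleton (Algebra.H1Cotangent k K)] {ι : Type*}
    {x : ι → K} (b : Module.Basis ι K Ω[K⁄k]) (hb : ∀ i, b i = D k K (x i)) :
    IsTranscendenceBasis k x := by
  have : Finite ι := Module.Finite.finite_basis b
  have hspan : Submodule.span K (D k K '' Set.range x) = ⊤ := by
    rw [← Set.range_comp, ← b.span_eq, funext hb]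
    rfl
  have := isSeparable_adjoin_of_span_D_eq_top hspan
  exact (algebraicIndependent_of_basis_D b hb).isTranscendenceBasis_iff_isAlgebraic.mpr
    (IntermediateField.isAlgebraic_adjoin_iff_top.mp inferInstance)

lemma rank_kaehlerDifferential_eq_trdeg [Subsingleton (Algebra.H1Cotangent k K)] :
    Module.rank K Ω[K⁄k] = Algebra.trdeg k K := by
  obtain ⟨ι, x, b, hb⟩ := exists_basis_D k K
  rw [← b.mk_eq_rank'', (isTranscendenceBasis_of_basis_D b hb).cardinalMk_eq_trdeg]

end FieldExtension

section Conormal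

lemma exists_comp_kerCotangentToTensor_eq_id (R A K : Type*) [CommRing R] [CommRing A] [CommRing K]
    [Algebra R A] [Algebra R K] [Algebra A K] [IsScalarTower R A K]
    [Algebra.FormallySmooth R K] (hs : Surjective (algebraMap A K)) :
    ∃ l, l ∘ₗ kerCotangentToTensor R A K = LinearMap.id := by
  let q := (IsScalarTower.toAlgHom R A K).kerSquareLift
  have hq : Surjective q := Ideal.Quotient.lift_surjective_of_surjective _ _ hs
  have hq' : IsNilpotent (RingHom.ker q.toRingHom) :=
    ⟨2, by rw [AlgHom.ker_kerSquareLift, Ideal.cotangentIdeal_square]; rfl⟩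
  let l := (retractionKerCotangentToTensorEquivSection hs).symm
    ⟨Algebra.FormallySmooth.liftOfSurjective (AlgHom.id R K) q hq hq',
      Algebra.FormallySmooth.comp_liftOfSurjective _ q hq hq'⟩
  exact ⟨l.1, l.2⟩

/- The ideal `I` is kept separate from the kernel because `maximalIdeal A` equals the kernel of
`A → ResidueField A` only propositionally. -/
lemma exists_cotangent_injective_exact_mapBaseChange {R A K : Type*} [CommRing R] [CommRing A]
    [CommRing K] [Algebra R A] [Algebra R K] [Algebra A K] [IsScalarTower R A K]
    [Algebra.FormallySmooth R K] (hs : Surjective (algebraMap A K)) {I : Ideal A}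
    (hI : RingHom.ker (algebraMap A K) = I) :
    ∃ f : I.Cotangent →ₗ[A] K ⊗[A] Ω[A⁄R], Injective f ∧ Exact f (mapBaseChange R A K) := by
  subst hI
  obtain ⟨l, hl⟩ := exists_comp_kerCotangentToTensor_eq_id R A K hs
  exact ⟨kerCotangentToTensor R A K, LeftInverse.injective (g := l) (DFunLike.congr_fun hl),
    exact_kerCotangentToTensor_mapBaseChange R A K hs⟩

lemma rank_residueField_tensor_kaehlerDifferential (R A : Type*) [CommRing R] [CommRing A]
    [IsLocalRing A] [Algebra R A] [Algebra.FormallySmooth R (ResidueField A)] :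
    Module.rank (ResidueField A) (ResidueField A ⊗[A] Ω[A⁄R]) =
      Module.rank (ResidueField A) (CotangentSpace A) +
        Module.rank (ResidueField A) Ω[ResidueField A⁄R] := by
  have hs : Surjective (algebraMap A (ResidueField A)) := residue_surjective
  obtain ⟨f, hf, hexact⟩ :=
    exists_cotangent_injective_exact_mapBaseChange (R := R) hs (ker_residue (R := A))
  let F : CotangentSpace A →ₗ[ResidueField A] ResidueField A ⊗[A] Ω[A⁄R] :=
    f.extendScalarsOfSurjective hs
  have hF : LinearMap.ker (mapBaseChange R A (ResidueField A)) = LinearMap.range F :=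
    SetLike.ext hexact
  rw [LinearMap.rank_eq_of_surjective (mapBaseChange_surjective R A _ hs), hF,
    rank_range_of_injective F hf, add_comm]

end Conormal

section Fiber

/-- The fiber of `Ω¹` at `𝔭` may be computed over the local ring `B_𝔭` instead of `B`. -/
noncomputable def residueFieldTensorKaehlerEquiv (R : Type*) {B : Type*} [CommRing R] [CommRing B]
    [Algebra R B] (p : Ideal B) [p.IsPrime] :
    p.ResidueField ⊗[B] Ω[B⁄R] ≃ₗ[p.ResidueField]
      p.ResidueField ⊗[Localization.AtPrime p] Ω[Localization.AtPrime p⁄R] :=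
  have : Algebra.FormallyEtale B (Localization.AtPrime p) := .of_isLocalization p.primeCompl
  (AlgebraTensorModule.cancelBaseChange B (Localization.AtPrime p) _ _ _).symm ≪≫ₗ
    AlgebraTensorModule.congr (.refl _ _)
      (tensorKaehlerEquivOfFormallyEtale R B (Localization.AtPrime p))

variable {k B : Type*} [Field k] [CommRing B] [Algebra k B] (p : Ideal B) [p.IsPrime]
  [Algebra.EssFiniteType k p.ResidueField] [Algebra.FormallySmooth k p.ResidueField]

lemma rank_kaehler_fiber :
    Module.rank p.ResidueField (p.ResidueField ⊗[B] Ω[B⁄k]) =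
      Module.rank p.ResidueField (CotangentSpace (Localization.AtPrime p)) +
        Algebra.trdeg k p.ResidueField := by
  rw [(residueFieldTensorKaehlerEquiv k p).rank_eq, rank_residueField_tensor_kaehlerDifferential,
    rank_kaehlerDifferential_eq_trdeg]

theorem finrank_kaehler_fiber_general
    [FiniteDimensional p.ResidueField (CotangentSpace (Localization.AtPrime p))]
    {ι : Type*} [Fintype ι] {x : ι → p.ResidueField} (hx : IsTranscendenceBasis k x) :
    Module.finrank p.ResidueField (p.ResidueField ⊗[B] Ω[B⁄k]) =
      Module.finrank p.ResidueField (CotangentSpace (Localization.AtPrime p)) +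
        Fintype.card ι := by
  have htrdeg : (Algebra.trdeg k p.ResidueField).toNat = Fintype.card ι := by
    simpa using congrArg Cardinal.toNat hx.lift_cardinalMk_eq_trdeg.symm
  rw [Module.finrank, rank_kaehler_fiber, Cardinal.toNat_add (Module.rank_lt_aleph0 _ _)
    (trdeg_lt_aleph0 k p.ResidueField), htrdeg, Module.finrank]

end Fiber

/-- Let `B` be a `k`-algebra of finite type and `𝔭` a prime of `B` with
separably generated (= formally smooth) residue field `κ = k(𝔭)`.  Then
`Ω¹_{B/k} ⊗_B κ` is a free `κ`-vector space of dimension `d + t`, where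
`d = dim_κ (𝔭B_𝔭/𝔭²B_𝔭)` and `t = trdeg_k κ` (the cardinality of any transcendence basis). -/
theorem finrank_kaehler_fiber
    (k B : Type u) [Field k] [CommRing B] [Algebra k B] [Algebra.FiniteType k B]
    (p : Ideal B) [p.IsPrime]
    (hfs : Algebra.FormallySmooth k (IsLocalRing.ResidueField (Localization.AtPrime p))) :
    Module.Free (IsLocalRing.ResidueField (Localization.AtPrime p))
      ((IsLocalRing.ResidueField (Localization.AtPrime p)) ⊗[B] (KaehlerDifferential k B)) ∧
    ∀ (ι : Type) [Fintype ι] (x : ι → IsLocalRing.ResidueField (Localization.AtPrime p)),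
      IsTranscendenceBasis k x →
      Module.finrank (IsLocalRing.ResidueField (Localization.AtPrime p))
          ((IsLocalRing.ResidueField (Localization.AtPrime p)) ⊗[B] (KaehlerDifferential k B)) =
        Module.finrank (IsLocalRing.ResidueField (Localization.AtPrime p))
          (IsLocalRing.CotangentSpace (Localization.AtPrime p)) + Fintype.card ι := by
  have := Algebra.EssFiniteType.isNoetherianRing k (Localization.AtPrime p)
  have : Algebra.EssFiniteType k p.ResidueField := .comp k B _
  exact ⟨inferInstance, fun _ _ _ hx ↦ finrank_kaehler_fiber_general p hx⟩
end
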